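/- Comparison principle: Assume (H1)–(H3). Let U : [0,T]×ℝⁿ → ℝ be a bounded upper semicontinuous viscosity subsolution of equation (HJB1), and let V : [0,T]×ℝⁿ → ℝ be a bounded lower semicontinuous viscosity supersolution of equation (HJB1). Then U(t,x) ≤ V(t,x) for all (t,x) ∈ [0,T]×ℝⁿ. -/

import Mathlib

open scoped BigOperators RealInnerProductSpace
open Filter Matrix Set Topology

noncomputable section

/-- Euclidean state space ℝⁿ. -/
abbrev EucSp (n : ℕ) := EuclideanSpace ℝ (Fin n)

variable {n d : ℕ}

/-- The parabolic domain `[0, T) × ℝⁿ`. -/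
def pdom (T : ℝ) (n : ℕ) : Set (ℝ × EucSp n) := Set.Ico (0 : ℝ) T ×ˢ (Set.univ : Set (EucSp n))

/-- Time derivative `∂ₜφ(t,x)`. -/
def tderiv (φ : ℝ → EucSp n → ℝ) (t : ℝ) (x : EucSp n) : ℝ :=
  deriv (fun s => φ s x) t

/-- Spatial gradient `∇ₓφ(t,x)`. -/
def xgrad (φ : ℝ → EucSp n → ℝ) (t : ℝ) (x : EucSp n) : EucSp n :=
  gradient (fun y => φ t y) x

/-- Spatial Hessian matrix `∇ₓ²φ(t,x)`. -/
def xhess (φ : ℝ → EucSp n → ℝ) (t : ℝ) (x : EucSp n) : Matrix (Fin n) (Fin n) ℝ :=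
  fun i j => fderiv ℝ (fun y => xgrad φ t y) x (EuclideanSpace.single j 1) i

/-- The second order operator `Lφ(t,x) = ⟨b, ∇ₓφ⟩ + ½ tr[σσᵀ ∇ₓ²φ]`. -/
def Lop (b : ℝ → EucSp n → EucSp n) (σ : ℝ → EucSp n → Matrix (Fin n) (Fin d) ℝ)
    (φ : ℝ → EucSp n → ℝ) (t : ℝ) (x : EucSp n) : ℝ :=
  ⟪b t x, xgrad φ t x⟫ + (1 / 2) * (σ t x * (σ t x)ᵀ * xhess φ t x).trace

/-- `φ` is of class `C^{1,2}` on the set `s`. -/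
structure IsC12On (φ : ℝ → EucSp n → ℝ) (s : Set (ℝ × EucSp n)) : Prop where
  cont : ContinuousOn (fun p : ℝ × EucSp n => φ p.1 p.2) s
  diff_t : ∀ p ∈ s, DifferentiableAt ℝ (fun t => φ t p.2) p.1
  cont_t : ContinuousOn (fun p : ℝ × EucSp n => tderiv φ p.1 p.2) s
  diff_x : ∀ p ∈ s, DifferentiableAt ℝ (fun y => φ p.1 y) p.2
  diff_grad : ∀ p ∈ s, DifferentiableAt ℝ (fun y => xgrad φ p.1 y) p.2
  cont_grad : ContinuousOn (fun p : ℝ × EucSp n => xgrad φ p.1 p.2) s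
  cont_hess : ContinuousOn (fun p : ℝ × EucSp n => xhess φ p.1 p.2) s

/-- The intervention operator `(MW)(t,x) = sup_{ξ∈K} [W(t,x+ξ) − c(t,x,ξ)]`. -/
def Mop (K : Set (EucSp n)) (c : ℝ → EucSp n → EucSp n → ℝ) (W : ℝ → EucSp n → ℝ)
    (t : ℝ) (x : EucSp n) : ℝ :=
  sSup ((fun ξ => W t (x + ξ) - c t x ξ) '' K)

/-- The intervention operator `(M̃W)(t,x) = sup_{ξ∈K} [W(t,x+ξ) − e^t c(t,x,ξ)]`. -/
def Mtop (K : Set (EucSp n)) (c : ℝ → EucSp n → EucSp n → ℝ) (W : ℝ → EucSp n → ℝ)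
    (t : ℝ) (x : EucSp n) : ℝ :=
  sSup ((fun ξ => W t (x + ξ) - Real.exp t * c t x ξ) '' K)

/-- Upper semicontinuous envelope, limits taken with `s < T`. -/
def uscEnvT (T : ℝ) (W : ℝ → EucSp n → ℝ) (t : ℝ) (x : EucSp n) : ℝ :=
  limsup (fun p : ℝ × EucSp n => W p.1 p.2) (𝓝[{p : ℝ × EucSp n | p.1 < T}] (t, x))

/-- Lower semicontinuous envelope, limits taken with `s < T`. -/
def lscEnvT (T : ℝ) (W : ℝ → EucSp n → ℝ) (t : ℝ) (x : EucSp n) : ℝ :=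
  liminf (fun p : ℝ × EucSp n => W p.1 p.2) (𝓝[{p : ℝ × EucSp n | p.1 < T}] (t, x))

/-- Quadratic form `⟨Xv, v⟩` of a matrix. -/
def qform (X : Matrix (Fin n) (Fin n) ℝ) (v : EucSp n) : ℝ :=
  ∑ i, ∑ j, X i j * v j * v i

/-- Parabolic subjet membership: `(p,q,X) ∈ J^{2,−}V(t,x)`. -/
def InSubjet (V : ℝ → EucSp n → ℝ) (t : ℝ) (x : EucSp n)
    (p : ℝ) (q : EucSp n) (X : Matrix (Fin n) (Fin n) ℝ) : Prop :=
  X.IsSymm ∧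
  ∀ ε > (0 : ℝ), ∀ᶠ sy : ℝ × EucSp n in 𝓝 (t, x),
    V sy.1 sy.2 ≥ V t x + p * (sy.1 - t) + ⟪q, sy.2 - x⟫
      + (1 / 2) * qform X (sy.2 - x) - ε * (|sy.1 - t| + ‖sy.2 - x‖ ^ 2)

/-- Parabolic superjet membership: `(p,q,X) ∈ J^{2,+}V(t,x)`. -/
def InSuperjet (V : ℝ → EucSp n → ℝ) (t : ℝ) (x : EucSp n)
    (p : ℝ) (q : EucSp n) (X : Matrix (Fin n) (Fin n) ℝ) : Prop :=
  X.IsSymm ∧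
  ∀ ε > (0 : ℝ), ∀ᶠ sy : ℝ × EucSp n in 𝓝 (t, x),
    V sy.1 sy.2 ≤ V t x + p * (sy.1 - t) + ⟪q, sy.2 - x⟫
      + (1 / 2) * qform X (sy.2 - x) + ε * (|sy.1 - t| + ‖sy.2 - x‖ ^ 2)

/-- Viscosity subsolution of equation (HJB1). -/
def IsSubHJB1 (T : ℝ) (b : ℝ → EucSp n → EucSp n) (σ : ℝ → EucSp n → Matrix (Fin n) (Fin d) ℝ)
    (f : ℝ → EucSp n → ℝ) (g : EucSp n → ℝ) (K : Set (EucSp n))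
    (c : ℝ → EucSp n → EucSp n → ℝ) (U : ℝ → EucSp n → ℝ) : Prop :=
  (∀ t₀ x₀, (t₀, x₀) ∈ pdom T n → ∀ φ : ℝ → EucSp n → ℝ, IsC12On φ (pdom T n) →
    IsLocalMaxOn (fun p : ℝ × EucSp n => U p.1 p.2 - φ p.1 p.2) (pdom T n) (t₀, x₀) →
    min (U t₀ x₀ - tderiv φ t₀ x₀ - Lop b σ φ t₀ x₀ - Real.exp t₀ * f t₀ x₀)
        (U t₀ x₀ - Mtop K c U t₀ x₀) ≤ 0) ∧
  (∀ x, U T x ≤ Real.exp T * g x)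

/-- Viscosity supersolution of equation (HJB1). -/
def IsSuperHJB1 (T : ℝ) (b : ℝ → EucSp n → EucSp n) (σ : ℝ → EucSp n → Matrix (Fin n) (Fin d) ℝ)
    (f : ℝ → EucSp n → ℝ) (g : EucSp n → ℝ) (K : Set (EucSp n))
    (c : ℝ → EucSp n → EucSp n → ℝ) (V : ℝ → EucSp n → ℝ) : Prop :=
  (∀ t₀ x₀, (t₀, x₀) ∈ pdom T n → ∀ φ : ℝ → EucSp n → ℝ, IsC12On φ (pdom T n) →
    IsLocalMinOn (fun p : ℝ × EucSp n => V p.1 p.2 - φ p.1 p.2) (pdom T n) (t₀, x₀) →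
    0 ≤ min (V t₀ x₀ - tderiv φ t₀ x₀ - Lop b σ φ t₀ x₀ - Real.exp t₀ * f t₀ x₀)
        (V t₀ x₀ - Mtop K c V t₀ x₀)) ∧
  (∀ x, Real.exp T * g x ≤ V T x)

section Abstract
variable {E : Type*} [NormedAddCommGroup E] [InnerProductSpace ℝ E]

lemma aux_norm_sub_sq (x y : E) : ‖x - y‖ ^ 2 = ‖x‖ ^ 2 - 2 * ⟪x, y⟫ + ‖y‖ ^ 2 :=
  norm_sub_sq_real x y

lemma aux_norm_add_sq (x y : E) : ‖x + y‖ ^ 2 = ‖x‖ ^ 2 + 2 * ⟪x, y⟫ + ‖y‖ ^ 2 :=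
  norm_add_sq_real x y

/-- sup-convolution -/
lemma exists_supconv {O : Set E} (hO : IsCompact O) (hne : O.Nonempty) {u : E → ℝ}
    (hu : UpperSemicontinuousOn u O) (a : ℝ) :
    ∃ S : E → ℝ, (∀ y, ∀ z ∈ O, u z - a / 2 * ‖y - z‖ ^ 2 ≤ S y) ∧
      (∀ y, ∃ z ∈ O, S y = u z - a / 2 * ‖y - z‖ ^ 2) := by
  have key : ∀ y : E, ∃ z ∈ O, ∀ z' ∈ O,
      u z' - a / 2 * ‖y - z'‖ ^ 2 ≤ u z - a / 2 * ‖y - z‖ ^ 2 := by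
    intro y
    have h : UpperSemicontinuousOn (fun z => u z + (- (a / 2 * ‖y - z‖ ^ 2))) O := by
      apply UpperSemicontinuousOn.add hu
      apply ContinuousOn.upperSemicontinuousOn
      fun_prop
    obtain ⟨z, hz, hmax⟩ := h.exists_isMaxOn hne hO
    refine ⟨z, hz, fun z' hz' => ?_⟩
    have := hmax hz'
    simp only [mem_ofPred_eq] at this
    linarith
  choose ζ hζ hζm using key
  exact ⟨fun y => u (ζ y) - a / 2 * ‖y - ζ y‖ ^ 2, fun y z hz => hζm y z hz,
    fun y => ⟨ζ y, hζ y, rfl⟩⟩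

lemma supconv_semiconvex {O : Set E} {u S : E → ℝ} {a : ℝ}
    (h1 : ∀ y, ∀ z ∈ O, u z - a / 2 * ‖y - z‖ ^ 2 ≤ S y)
    (h2 : ∀ y, ∃ z ∈ O, S y = u z - a / 2 * ‖y - z‖ ^ 2) (y e : E) (θ : ℝ)
    (hθ0 : 0 ≤ θ) (hθ1 : θ ≤ 1) :
    S (y + θ • e) ≤ (1 - θ) * S y + θ * S (y + e) + θ * (1 - θ) * (a / 2) * ‖e‖ ^ 2 := by
  obtain ⟨z, hz, hS⟩ := h2 (y + θ • e)
  have e1 : y + θ • e - z = (y - z) + θ • e := by abel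
  have e2 : y + e - z = (y - z) + e := by abel
  have a1 := h1 y z hz
  have a2 := h1 (y + e) z hz
  rw [e2, aux_norm_add_sq] at a2
  rw [hS, e1, aux_norm_add_sq, inner_smul_right, norm_smul, Real.norm_eq_abs, mul_pow, sq_abs]
  nlinarith [mul_le_mul_of_nonneg_left a1 (sub_nonneg.2 hθ1), mul_le_mul_of_nonneg_left a2 hθ0]

lemma supconv_lsc {O : Set E} {u S : E → ℝ} {a : ℝ}
    (h1 : ∀ y, ∀ z ∈ O, u z - a / 2 * ‖y - z‖ ^ 2 ≤ S y)
    (h2 : ∀ y, ∃ z ∈ O, S y = u z - a / 2 * ‖y - z‖ ^ 2) : LowerSemicontinuous S := by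
  intro y c hc
  obtain ⟨z, hz, hS⟩ := h2 y
  have hcont : Continuous fun y' => u z - a / 2 * ‖y' - z‖ ^ 2 := by fun_prop
  have := hcont.continuousAt.eventually (lt_mem_nhds (b := u z - a / 2 * ‖y - z‖ ^ 2) (hS ▸ hc))
  filter_upwards [this] with y' hy'
  exact hy'.trans_le (h1 y' z hz)

/-- minimizer for the inf-convolution. -/
lemma exists_infconv [FiniteDimensional ℝ E] {O : Set E} (hne : O.Nonempty) {u S : E → ℝ} {a b : ℝ} (ha : 0 < a)
    (hab : 2 * a ≤ b)
    (h1 : ∀ y, ∀ z ∈ O, u z - a / 2 * ‖y - z‖ ^ 2 ≤ S y)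
    (h2 : ∀ y, ∃ z ∈ O, S y = u z - a / 2 * ‖y - z‖ ^ 2) (x : E) :
    ∃ y, ∀ y', S y + b / 2 * ‖x - y‖ ^ 2 ≤ S y' + b / 2 * ‖x - y'‖ ^ 2 := by
  have : ProperSpace E := FiniteDimensional.proper ℝ E
  obtain ⟨z, hz⟩ := hne
  set G : E → ℝ := fun y => S y + b / 2 * ‖x - y‖ ^ 2 with hG
  have hlsc : LowerSemicontinuous G := by
    apply (supconv_lsc h1 h2).add
    apply Continuous.lowerSemicontinuous
    fun_prop
  -- G y ≥ u z - a ‖x-z‖² + (b/2 - a) ... ; coercivity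
  have hco : ∀ y, u z - a * ‖x - z‖ ^ 2 - a * ‖x - z‖ ^ 2 + a / 4 * ‖x - y‖ ^ 2 ≤ G y := by
    intro y
    have := h1 y z hz
    have e : y - z = (x - z) - (x - y) := by abel
    rw [e, aux_norm_sub_sq] at this
    have h3 : 0 ≤ ‖(2:ℝ) • (x - z) + (x-y)‖ ^ 2 := by positivity
    have h4 : 0 ≤ ‖(x - z) + (1/2 : ℝ) • (x-y)‖ ^ 2 := by positivity
    rw [aux_norm_add_sq, inner_smul_right, norm_smul] at h4
    simp only [hG]
    norm_num at h4
    nlinarith [mul_le_mul_of_nonneg_right hab (sq_nonneg ‖x - y‖), mul_nonneg ha.le h4,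
      mul_nonneg ha.le (sq_nonneg ‖x - z‖),mul_nonneg ha.le (sq_nonneg ‖x - y‖),
      mul_nonneg ha.le (sq_nonneg (‖x - y‖ - 2 * ‖x-z‖)),
      mul_nonneg ha.le (sub_nonneg.2 (abs_le.1 (abs_real_inner_le_norm (x - z) (x-y))).1)]
  set C := u z - a * ‖x - z‖ ^ 2 - a * ‖x - z‖ ^ 2
  obtain ⟨ρ, hρ0, hρ⟩ : ∃ ρ > 0, G x < C + a / 4 * ρ ^ 2 := by
    refine ⟨|G x - C| * (4 / a) + 1, by positivity, ?_⟩
    have h5 : |G x - C| * (4 / a) + 1 ≤ (|G x - C| * (4 / a) + 1) ^ 2 := by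
      have : 0 ≤ |G x - C| * (4 / a) := by positivity
      nlinarith
    have h6 : a / 4 * (|G x - C| * (4 / a) + 1) = |G x - C| + a / 4 := by field_simp
    have := mul_le_mul_of_nonneg_left h5 (by positivity : 0 ≤ a / 4)
    have := le_abs_self (G x - C)
    linarith
  obtain ⟨y, hy, hmin⟩ := (hlsc.lowerSemicontinuousOn (Metric.closedBall x ρ)).exists_isMinOn
    ⟨x, by simp [hρ0.le]⟩ (isCompact_closedBall x ρ)
  refine ⟨y, fun y' => ?_⟩
  by_cases hy' : y' ∈ Metric.closedBall x ρ
  · exact hmin hy'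
  · have hx : G y ≤ G x := hmin (by simp [hρ0.le])
    have : ρ < ‖x - y'‖ := by
      rw [Metric.mem_closedBall, dist_comm, dist_eq_norm] at hy'; linarith
    have : ρ ^ 2 ≤ ‖x - y'‖ ^ 2 := by gcongr
    have h7 := mul_le_mul_of_nonneg_left this (by positivity : 0 ≤ a / 4)
    change G y ≤ G y'
    linarith [hco y']

/-- the minimizer gives a subgradient. -/
lemma infconv_subgrad {O : Set E} {u S : E → ℝ} {a b : ℝ}
    (h1 : ∀ y, ∀ z ∈ O, u z - a / 2 * ‖y - z‖ ^ 2 ≤ S y)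
    (h2 : ∀ y, ∃ z ∈ O, S y = u z - a / 2 * ‖y - z‖ ^ 2) {x y : E}
    (hmin : ∀ y', S y + b / 2 * ‖x - y‖ ^ 2 ≤ S y' + b / 2 * ‖x - y'‖ ^ 2) (e : E) :
    S y + ⟪b • (x - y), e⟫ - a / 2 * ‖e‖ ^ 2 ≤ S (y + e) := by
  have key : ∀ θ : ℝ, 0 < θ → θ ≤ 1 →
      S y + ⟪b • (x - y), e⟫ - a / 2 * ‖e‖ ^ 2 ≤ S (y + e) + θ * (b / 2 - a / 2) * ‖e‖ ^ 2 := by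
    intro θ h0 h1'
    have k1 := supconv_semiconvex h1 h2 y e θ h0.le h1'
    have k2 := hmin (y + θ • e)
    have e1 : x - (y + θ • e) = (x - y) - θ • e := by abel
    rw [e1, aux_norm_sub_sq (x-y), inner_smul_right, norm_smul, Real.norm_eq_abs, mul_pow, sq_abs] at k2
    rw [inner_smul_left]
    simp only [conj_trivial]
    by_contra hcon
    push Not at hcon
    have := mul_lt_mul_of_pos_left hcon h0
    nlinarith
  have hlim : Tendsto (fun θ : ℝ => S (y + e) + θ * (b / 2 - a / 2) * ‖e‖ ^ 2) (𝓝[>] 0)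
      (𝓝 (S (y + e) + 0 * (b / 2 - a / 2) * ‖e‖ ^ 2)) := by
    apply Tendsto.mono_left _ nhdsWithin_le_nhds
    apply Continuous.tendsto (f := fun θ : ℝ => S (y + e) + θ * (b / 2 - a / 2) * ‖e‖ ^ 2)
    fun_prop
  have := ge_of_tendsto hlim (b := S y + ⟪b • (x - y), e⟫ - a / 2 * ‖e‖ ^ 2) (by
    filter_upwards [Ioc_mem_nhdsGT (zero_lt_one)] with θ hθ
    exact key θ hθ.1 hθ.2)
  linarith

end Abstract

section Abstract2
variable {E : Type*} [NormedAddCommGroup E] [InnerProductSpace ℝ E]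

/-- bounds for the inf-convolution -/
lemma infconv_upper {S R : E → ℝ} {y : E → E} {b : ℝ}
    (hR : ∀ x, R x = S (y x) + b / 2 * ‖x - y x‖ ^ 2)
    (hRle : ∀ x y', R x ≤ S y' + b / 2 * ‖x - y'‖ ^ 2) (x h : E) :
    R (x + h) ≤ R x + ⟪b • (x - y x), h⟫ + b / 2 * ‖h‖ ^ 2 := by
  have := hRle (x + h) (y x)
  have e : x + h - y x = (x - y x) + h := by abel
  rw [e, aux_norm_add_sq] at this
  rw [hR x, inner_smul_left]
  simp only [conj_trivial]
  linarith

lemma infconv_lower {O : Set E} {u S R : E → ℝ} {y : E → E} {a b : ℝ} (ha : 0 < a)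
    (hab : 2 * a ≤ b)
    (h1 : ∀ y, ∀ z ∈ O, u z - a / 2 * ‖y - z‖ ^ 2 ≤ S y)
    (h2 : ∀ y, ∃ z ∈ O, S y = u z - a / 2 * ‖y - z‖ ^ 2)
    (hR : ∀ x, R x = S (y x) + b / 2 * ‖x - y x‖ ^ 2)
    (hRle : ∀ x y', R x ≤ S y' + b / 2 * ‖x - y'‖ ^ 2) (x h : E) :
    R x + ⟪b • (x - y x), h⟫ - a * ‖h‖ ^ 2 ≤ R (x + h) := by
  have hmin : ∀ y', S (y x) + b / 2 * ‖x - y x‖ ^ 2 ≤ S y' + b / 2 * ‖x - y'‖ ^ 2 := by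
    intro y'; rw [← hR]; exact hRle x y'
  set e : E := y (x + h) - y x with he
  have k1 := infconv_subgrad h1 h2 hmin e
  have e1 : y x + e = y (x + h) := by rw [he]; abel
  rw [e1] at k1
  rw [hR (x + h), hR x]
  have e2 : x + h - y (x + h) = (x - y x) + (h - e) := by rw [he]; abel
  have e3 : ‖e‖ ^ 2 ≤ 2 * ‖h‖ ^ 2 + 2 * ‖h - e‖ ^ 2 := by
    have : e = h - (h - e) := by abel
    have h3 : 0 ≤ ‖h + (h - e)‖ ^ 2 := by positivity
    rw [aux_norm_add_sq] at h3
    have h4 : ‖e‖ ^ 2 = ‖h - (h - e)‖ ^ 2 := by rw [← this]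
    rw [aux_norm_sub_sq h] at h4
    linarith
  rw [e2, aux_norm_add_sq, inner_sub_right]
  rw [inner_smul_left] at k1 ⊢
  simp only [conj_trivial] at k1 ⊢
  nlinarith [mul_le_mul_of_nonneg_right hab (sq_nonneg ‖h - e‖), mul_le_mul_of_nonneg_left e3 ha.le]

/-- Semiconcavity from upper supporting paraboloids. -/
lemma semiconcave_of_upper {R : E → ℝ} {q : E → E} {b : ℝ}
    (hup : ∀ x h, R (x + h) ≤ R x + ⟪q x, h⟫ + b / 2 * ‖h‖ ^ 2) (x h : E) (θ : ℝ)
    (h0 : 0 ≤ θ) (h1 : θ ≤ 1) :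
    (1 - θ) * R x + θ * R (x + h) ≤ R (x + θ • h) + b / 2 * (θ * (1 - θ)) * ‖h‖ ^ 2 := by
  have k1 := hup (x + θ • h) (-(θ • h))
  have k2 := hup (x + θ • h) ((1 - θ) • h)
  have e1 : x + θ • h + -(θ • h) = x := by abel
  have e2 : x + θ • h + (1 - θ) • h = x + h := by rw [sub_smul, one_smul]; abel
  rw [e1, inner_neg_right, inner_smul_right, norm_neg, norm_smul, mul_pow, Real.norm_eq_abs, sq_abs] at k1
  rw [e2, inner_smul_right, norm_smul, mul_pow, Real.norm_eq_abs, sq_abs] at k2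
  nlinarith [mul_le_mul_of_nonneg_left k1 (sub_nonneg.2 h1), mul_le_mul_of_nonneg_left k2 h0]

/-- algebraic inequality for the transfer. -/
lemma transfer_alg {X : E →L[ℝ] E} {a α b δ ε : ℝ} (ha : 0 < a) (hα : 0 < α) (hδ : 0 < δ)
    (hb : 4 * (α + 1) + 2 * a + (α + 4 * a) ^ 2 / δ ≤ b) (hε1 : ε ≤ 1 / 2)
    (hε0 : 0 < ε) (hε2 : ε ≤ δ / 4)
    (hXl : ∀ h, -(2 * a) * ‖h‖ ^ 2 ≤ ⟪X h, h⟫) (hXu : ∀ h, ⟪X h, h⟫ ≤ α * ‖h‖ ^ 2) (h k : E) :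
    1 / 2 * ⟪X h, h⟫ + ε * ‖h‖ ^ 2 - b / 2 * ‖h - k‖ ^ 2 ≤ 1 / 2 * ⟪X k, k⟫ + δ * ‖k‖ ^ 2 := by
  obtain ⟨m, rfl⟩ : ∃ m, h = k + m := ⟨h - k, by abel⟩
  have e1 : k + m - k = m := by abel
  rw [e1]
  set s := δ / (α + 4 * a) with hs
  have hs0 : 0 < s := by positivity
  have hsδ : (α + 4 * a) * s = δ := by rw [hs]; field_simp
  have hsi : (α + 4 * a) / s = (α + 4 * a) ^ 2 / δ := by rw [hs]; field_simp
  have p1 := hXl (s • k - m)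
  have p2 := hXu k
  have p3 := hXu m
  have n1 : ‖s • k - m‖ ^ 2 = s ^ 2 * ‖k‖ ^ 2 - 2 * s * ⟪k, m⟫ + ‖m‖ ^ 2 := by
    rw [aux_norm_sub_sq, inner_smul_left, norm_smul, mul_pow, Real.norm_eq_abs, sq_abs]
    simp; ring
  have n2 : ⟪X (s • k - m), s • k - m⟫ = s ^ 2 * ⟪X k, k⟫ - s * (⟪X k, m⟫ + ⟪X m, k⟫) + ⟪X m, m⟫ := by
    simp only [map_sub, map_smul, inner_sub_left, inner_sub_right, inner_smul_left, inner_smul_right]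
    simp; ring
  have n3 : ⟪X (k + m), k + m⟫ = ⟪X k, k⟫ + (⟪X k, m⟫ + ⟪X m, k⟫) + ⟪X m, m⟫ := by
    simp only [map_add, inner_add_left, inner_add_right]; ring
  have n4 : 0 ≤ ‖s • k + m‖ ^ 2 := by positivity
  rw [aux_norm_add_sq, inner_smul_left, norm_smul, mul_pow, Real.norm_eq_abs, sq_abs] at n4
  simp only [conj_trivial] at n4
  rw [n1, n2] at p1
  set B := ⟪X k, m⟫ + ⟪X m, k⟫
  set I := ⟪k, m⟫
  have q1 : s * B ≤ (α + 4 * a) * (s ^ 2 * ‖k‖ ^ 2 + ‖m‖ ^ 2) := by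
    nlinarith [mul_le_mul_of_nonneg_left p2 (sq_nonneg s), mul_nonneg ha.le n4]
  have q2 : B ≤ δ * ‖k‖ ^ 2 + (α + 4 * a) ^ 2 / δ * ‖m‖ ^ 2 := by
    rw [← hsi]
    have : B = (s * B) / s := by field_simp
    rw [this, div_le_iff₀ hs0]
    have : (δ * ‖k‖ ^ 2 + (α + 4 * a) / s * ‖m‖ ^ 2) * s =
      δ * s * ‖k‖ ^ 2 + (α + 4 * a) * ‖m‖ ^ 2 := by field_simp
    rw [this, ← hsδ]
    nlinarith
  have q3 : ‖k + m‖ ^ 2 ≤ 2 * ‖k‖ ^ 2 + 2 * ‖m‖ ^ 2 := by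
    have : 0 ≤ ‖k - m‖ ^ 2 := by positivity
    rw [aux_norm_sub_sq] at this
    rw [aux_norm_add_sq]; linarith
  rw [n3]
  have q4 := mul_le_mul_of_nonneg_left q3 hε0.le
  have q5 := mul_le_mul_of_nonneg_right hb (sq_nonneg ‖m‖)
  have q6 := mul_le_mul_of_nonneg_right hε1 (sq_nonneg ‖m‖)
  have q7 := mul_le_mul_of_nonneg_right hε2 (sq_nonneg ‖k‖)
  nlinarith [mul_nonneg ha.le (sq_nonneg ‖m‖), mul_nonneg hα.le (sq_nonneg ‖m‖), sq_nonneg ‖m‖]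

set_option maxHeartbeats 1000000 in
/-- transfer of the second order expansion of the inf-convolution to the sup-convolution. -/
lemma transfer_S {O : Set E} {u S R : E → ℝ} {y : E → E} {a α b δ : ℝ} (ha : 0 < a) (hα : 0 < α)
    (hδ : 0 < δ) (hb : 4 * (α + 1) + 2 * a + (α + 4 * a) ^ 2 / δ ≤ b)
    (h1 : ∀ y, ∀ z ∈ O, u z - a / 2 * ‖y - z‖ ^ 2 ≤ S y)
    (h2 : ∀ y, ∃ z ∈ O, S y = u z - a / 2 * ‖y - z‖ ^ 2)
    (hR : ∀ x, R x = S (y x) + b / 2 * ‖x - y x‖ ^ 2)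
    (hRle : ∀ x y', R x ≤ S y' + b / 2 * ‖x - y'‖ ^ 2) (x : E) {X : E →L[ℝ] E}
    (hXl : ∀ h, -(2 * a) * ‖h‖ ^ 2 ≤ ⟪X h, h⟫) (hXu : ∀ h, ⟪X h, h⟫ ≤ α * ‖h‖ ^ 2)
    (hexp : ∀ ε > 0, ∀ᶠ h in 𝓝 (0 : E),
      R (x + h) ≤ R x + ⟪b • (x - y x), h⟫ + 1 / 2 * ⟪X h, h⟫ + ε * ‖h‖ ^ 2) :
    ∀ᶠ k in 𝓝 (0 : E), S (y x + k) ≤ S (y x) + ⟪b • (x - y x), k⟫ + 1 / 2 * ⟪X k, k⟫ + δ * ‖k‖ ^ 2 := by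
  have hup := infconv_upper hR hRle
  set q := b • (x - y x) with hq
  have hfrac : 0 ≤ (α + 4 * a) ^ 2 / δ := by positivity
  set ε := min (1 / 2) (δ / 4) with hε
  have hε0 : 0 < ε := by positivity
  have hε1 : ε ≤ 1 / 2 := min_le_left _ _
  have hε2 : ε ≤ δ / 4 := min_le_right _ _
  obtain ⟨r', hr', hball⟩ := Metric.eventually_nhds_iff.1 (hexp ε hε0)
  set r := r' / 2 with hr
  have hr0 : 0 < r := by positivity
  have hb' : 4 * (α + 1) ≤ b := by nlinarith
  have hb2 : 2 * a ≤ b := by nlinarith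
  have hexp' : ∀ h, ‖h‖ ≤ r → R (x + h) ≤ R x + ⟪q, h⟫ + 1 / 2 * ⟪X h, h⟫ + ε * ‖h‖ ^ 2 := by
    intro h hh
    apply hball
    rw [dist_zero_right]; linarith
  rw [Metric.eventually_nhds_iff]
  refine ⟨r / 4, by positivity, fun k hk => ?_⟩
  rw [dist_zero_right] at hk
  -- the formula for all h
  have hsq : ∀ h, b / 2 * ‖x + h - (y x + k)‖ ^ 2 =
      b / 2 * ‖x - y x‖ ^ 2 + ⟪q, h⟫ - ⟪q, k⟫ + b / 2 * ‖h - k‖ ^ 2 := by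
    intro h
    have e : x + h - (y x + k) = (x - y x) + (h - k) := by abel
    rw [e, aux_norm_add_sq, hq, inner_smul_left, inner_smul_left, inner_sub_right]
    simp only [conj_trivial]; ring
  have hsmall : ∀ h, ‖h‖ ≤ r → R (x + h) - b / 2 * ‖x + h - (y x + k)‖ ^ 2 ≤
      S (y x) + ⟪q, k⟫ + (1 / 2 * ⟪X h, h⟫ + ε * ‖h‖ ^ 2 - b / 2 * ‖h - k‖ ^ 2) := by
    intro h hh
    rw [hsq]
    have := hexp' h hh
    have := hR x
    linarith
  have hg0 : R x - b / 2 * ‖x - (y x + k)‖ ^ 2 = S (y x) + ⟪q, k⟫ - b / 2 * ‖k‖ ^ 2 := by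
    have := hsq 0
    rw [add_zero, inner_zero_right, zero_sub, norm_neg] at this
    rw [this, hR x]; ring
  have hall : ∀ h, R (x + h) - b / 2 * ‖x + h - (y x + k)‖ ^ 2 ≤
      S (y x) + ⟪q, k⟫ + 1 / 2 * ⟪X k, k⟫ + δ * ‖k‖ ^ 2 := by
    intro h
    by_cases hh : ‖h‖ ≤ r
    · have := hsmall h hh
      have := transfer_alg ha hα hδ hb hε1 hε0 hε2 hXl hXu h k
      linarith
    · push Not at hh
      have hhpos : 0 < ‖h‖ := hr0.trans hh
      set θ := r / ‖h‖ with hθ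
      have hθ0 : 0 < θ := by positivity
      have hθ1 : θ ≤ 1 := by rw [hθ, div_le_one hhpos]; exact hh.le
      have hnorm : ‖θ • h‖ = r := by
        rw [norm_smul, Real.norm_eq_abs, abs_of_pos hθ0, hθ]; field_simp
      have hc := semiconcave_of_upper hup x h θ hθ0.le hθ1
      have hs := hsmall (θ • h) hnorm.le
      -- on the sphere, lower than at the center
      have hlow : 1 / 2 * ⟪X (θ • h), θ • h⟫ + ε * ‖θ • h‖ ^ 2 - b / 2 * ‖θ • h - k‖ ^ 2 ≤
          - (b / 2 * ‖k‖ ^ 2) := by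
        have t1 := hXu (θ • h)
        have t2 : ‖θ • h - k‖ ^ 2 = ‖θ • h‖ ^ 2 - 2 * ⟪θ • h, k⟫ + ‖k‖ ^ 2 := aux_norm_sub_sq _ _
        have t3 := real_inner_le_norm (θ • h) k
        rw [hnorm] at t1 t2 t3
        rw [t2, hnorm]
        have t4 : r * ‖k‖ ≤ r * (r / 4) := by gcongr
        have : b * ⟪θ • h, k⟫ ≤ b * (r * (r / 4)) :=
          mul_le_mul_of_nonneg_left (t3.trans t4) (by linarith)
        nlinarith [mul_le_mul_of_nonneg_right hb' (sq_nonneg r), mul_le_mul_of_nonneg_right hε1 (sq_nonneg r), mul_nonneg hα.le (sq_nonneg r)]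
      have hgm : R (x + θ • h) - b / 2 * ‖x + θ • h - (y x + k)‖ ^ 2 ≤
          R x - b / 2 * ‖x - (y x + k)‖ ^ 2 := by rw [hg0]; linarith
      have hle : R (x + h) - b / 2 * ‖x + h - (y x + k)‖ ^ 2 ≤
          R x - b / 2 * ‖x - (y x + k)‖ ^ 2 := by
        have f1 : x + θ • h - (y x + k) = (x - (y x + k)) + θ • h := by abel
        have f2 : x + h - (y x + k) = (x - (y x + k)) + h := by abel
        rw [f1, aux_norm_add_sq, inner_smul_right, norm_smul, mul_pow, Real.norm_eq_abs, sq_abs] at hgm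
        rw [f2, aux_norm_add_sq]
        have : θ * (R (x + h) - b / 2 * (‖x - (y x + k)‖ ^ 2 + 2 * ⟪x - (y x + k), h⟫ + ‖h‖ ^ 2)) ≤
          θ * (R x - b / 2 * ‖x - (y x + k)‖ ^ 2) := by nlinarith
        exact le_of_mul_le_mul_left this hθ0
      have := hXl k
      have g1 := mul_le_mul_of_nonneg_right hb2 (sq_nonneg ‖k‖)
      have g2 := mul_nonneg hδ.le (sq_nonneg ‖k‖)
      rw [hg0] at hle
      linarith
  -- representation of S (y + k)
  obtain ⟨z', hz', hSz⟩ := h2 (y x + k)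
  set y' := y x + k with hy'
  have hb0 : 0 < b := by linarith
  set x' := y' + (a / b) • (z' - y') with hx'
  have hxy : b • (x' - y') = a • (z' - y') := by
    rw [hx', add_sub_cancel_left, smul_smul]; congr 1; field_simp
  have hRx' : S y' + b / 2 * ‖x' - y'‖ ^ 2 ≤ R x' := by
    rw [hR x']
    set e := y x' - y' with he
    have e1 : x' - y x' = (x' - y') - e := by rw [he]; abel
    have e2 : y x' - z' = e - (z' - y') := by rw [he]; abel
    have e3 := h1 (y x') z' hz'
    have e4 : y' - z' = -(z' - y') := by abel
    rw [e2, aux_norm_sub_sq] at e3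
    rw [e4, norm_neg] at hSz
    rw [e1, aux_norm_sub_sq (x' - y')]
    have e5 : b * ⟪x' - y', e⟫ = a * ⟪e, z' - y'⟫ := by
      have : ⟪b • (x' - y'), e⟫ = ⟪a • (z' - y'), e⟫ := by rw [hxy]
      rw [inner_smul_left, inner_smul_left] at this
      simp only [conj_trivial] at this
      rw [this, real_inner_comm]
    nlinarith [mul_le_mul_of_nonneg_right hb2 (sq_nonneg ‖e‖), mul_nonneg ha.le (sq_nonneg ‖e‖)]
  have := hall (x' - x)
  have e6 : x + (x' - x) = x' := by abel
  rw [e6] at this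
  linarith

/-- Full transfer to `u`. -/
lemma transfer_u {O : Set E} {u S R : E → ℝ} {y : E → E} {a α b δ : ℝ} (ha : 0 < a) (hα : 0 < α)
    (hδ : 0 < δ) (hb : 4 * (α + 1) + 2 * a + (α + 4 * a) ^ 2 / δ ≤ b)
    (h1 : ∀ y, ∀ z ∈ O, u z - a / 2 * ‖y - z‖ ^ 2 ≤ S y)
    (h2 : ∀ y, ∃ z ∈ O, S y = u z - a / 2 * ‖y - z‖ ^ 2)
    (hR : ∀ x, R x = S (y x) + b / 2 * ‖x - y x‖ ^ 2)
    (hRle : ∀ x y', R x ≤ S y' + b / 2 * ‖x - y'‖ ^ 2) (x : E) {X : E →L[ℝ] E}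
    (hXl : ∀ h, -(2 * a) * ‖h‖ ^ 2 ≤ ⟪X h, h⟫) (hXu : ∀ h, ⟪X h, h⟫ ≤ α * ‖h‖ ^ 2)
    (hexp : ∀ ε > 0, ∀ᶠ h in 𝓝 (0 : E),
      R (x + h) ≤ R x + ⟪b • (x - y x), h⟫ + 1 / 2 * ⟪X h, h⟫ + ε * ‖h‖ ^ 2) :
    ∃ z ∈ O, R x ≤ u z - a / 2 * ‖x - z‖ ^ 2 ∧
      ∀ᶠ k in 𝓝 (0 : E), z + k ∈ O →
        u (z + k) ≤ u z + ⟪b • (x - y x), k⟫ + 1 / 2 * ⟪X k, k⟫ + δ * ‖k‖ ^ 2 := by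
  have hS := transfer_S ha hα hδ hb h1 h2 hR hRle x hXl hXu hexp
  have hfrac : 0 ≤ (α + 4 * a) ^ 2 / δ := by positivity
  have hb' : 4 * (α + 1) ≤ b := by nlinarith
  have hb2 : 2 * a ≤ b := by nlinarith
  have hb0 : 0 < b := by linarith
  obtain ⟨z, hz, hSz⟩ := h2 (y x)
  refine ⟨z, hz, ?_, ?_⟩
  · -- q = a (z - y)
    have hq : b • (x - y x) = a • (z - y x) := by
      set w := a • (z - y x) - b • (x - y x) with hw
      have key : ∀ᶠ k in 𝓝 (0 : E), ⟪w, k⟫ ≤ (α + a + δ) * ‖k‖ ^ 2 := by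
        filter_upwards [hS] with k hk
        have := h1 (y x + k) z hz
        have e : y x + k - z = (y x - z) + k := by abel
        rw [e, aux_norm_add_sq] at this
        have e2 : a * ⟪y x - z, k⟫ = - ⟪a • (z - y x), k⟫ := by
          rw [← neg_sub z (y x), inner_neg_left, inner_smul_left]; simp
        rw [hw, inner_sub_left]
        nlinarith [hXu k, mul_nonneg ha.le (sq_nonneg ‖k‖), mul_nonneg hα.le (sq_nonneg ‖k‖)]
      have hw0 : w = 0 := by
        have ht : Tendsto (fun t : ℝ => t • w) (𝓝[>] 0) (𝓝 0) := by
          have : Tendsto (fun t : ℝ => t • w) (𝓝 0) (𝓝 ((0:ℝ) • w)) :=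
            Continuous.tendsto (by fun_prop) _
          rw [zero_smul] at this
          exact this.mono_left nhdsWithin_le_nhds
        have h3 : ∀ᶠ t : ℝ in 𝓝[>] 0, ‖w‖ ^ 2 ≤ t * ((α + a + δ) * ‖w‖ ^ 2) := by
          filter_upwards [ht.eventually key, self_mem_nhdsWithin] with t ht' htpos
          have htpos' : 0 < t := htpos
          rw [inner_smul_right, real_inner_self_eq_norm_sq, norm_smul, mul_pow, Real.norm_eq_abs, sq_abs] at ht'
          have : t * ‖w‖ ^ 2 ≤ t * (t * ((α + a + δ) * ‖w‖ ^ 2)) := by nlinarith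
          exact le_of_mul_le_mul_left this htpos'
        have h4 : Tendsto (fun t : ℝ => t * ((α + a + δ) * ‖w‖ ^ 2)) (𝓝[>] 0) (𝓝 0) := by
          have : Tendsto (fun t : ℝ => t * ((α + a + δ) * ‖w‖ ^ 2)) (𝓝 0)
            (𝓝 (0 * ((α + a + δ) * ‖w‖ ^ 2))) := Continuous.tendsto (by fun_prop) _
          rw [zero_mul] at this
          exact this.mono_left nhdsWithin_le_nhds
        have h5 := ge_of_tendsto h4 h3
        have : ‖w‖ = 0 := by nlinarith [norm_nonneg w]
        exact norm_eq_zero.1 this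
      rw [hw] at hw0
      exact (sub_eq_zero.1 hw0).symm
    have e1 : x - y x = (a / b) • (z - y x) := by
      have : x - y x = (1 / b) • (b • (x - y x)) := by rw [smul_smul]; field_simp; simp
      rw [this, hq, smul_smul]; congr 1; field_simp
    have e2 : x - z = -((1 - a / b) • (z - y x)) := by
      have : x - z = (x - y x) - (z - y x) := by abel
      rw [this, e1, sub_smul, one_smul]; abel
    rw [hR x, hSz, e2, e1, norm_neg, norm_smul, norm_smul, mul_pow, mul_pow, Real.norm_eq_abs,
      Real.norm_eq_abs, sq_abs, sq_abs, ← neg_sub z (y x), norm_neg]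
    set t := a / b with ht
    have ht0 : 0 ≤ t := by positivity
    have ht1 : t ≤ 1 := by rw [ht, div_le_one hb0]; linarith
    have hbt : b * t = a := by rw [ht]; field_simp
    set N := ‖z - y x‖ ^ 2
    have hN : 0 ≤ N := by positivity
    have : b / 2 * (t ^ 2 * N) = a / 2 * t * N := by rw [← hbt]; ring
    rw [this]
    nlinarith [mul_nonneg (mul_nonneg ha.le hN) (mul_nonneg ht0 (sub_nonneg.2 ht1))]
  · filter_upwards [hS] with k hk hzk
    have := h1 (y x + k) (z + k) hzk
    have e : y x + k - (z + k) = y x - z := by abel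
    rw [e] at this
    linarith

end Abstract2

section Abstract3
variable {E : Type*} [NormedAddCommGroup E] [InnerProductSpace ℝ E]

lemma eq_zero_of_inner_le {w : E} {C : ℝ} (h : ∀ k, ⟪w, k⟫ ≤ C * ‖k‖ ^ 2) : w = 0 := by
  set D := |C| + 1 with hD
  have hD0 : 0 < D := by positivity
  have hCD : C ≤ D := by have := le_abs_self C; linarith
  have h1 := h ((1 / (2 * D)) • w)
  rw [inner_smul_right, real_inner_self_eq_norm_sq, norm_smul, mul_pow, Real.norm_eq_abs, sq_abs] at h1
  have h2 : C * ((1 / (2 * D)) ^ 2 * ‖w‖ ^ 2) ≤ D * ((1 / (2 * D)) ^ 2 * ‖w‖ ^ 2) := by gcongr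
  have h3 : D * ((1 / (2 * D)) ^ 2 * ‖w‖ ^ 2) = 1 / 2 * (1 / (2 * D) * ‖w‖ ^ 2) := by
    field_simp
  have h4 : 1 / (2 * D) * ‖w‖ ^ 2 ≤ 0 := by linarith
  have h5 : 0 < 1 / (2 * D) := by positivity
  have h6 : ‖w‖ ^ 2 ≤ 0 := by
    by_contra hc
    push Not at hc
    have := mul_pos h5 hc
    linarith
  have : ‖w‖ = 0 := by nlinarith [norm_nonneg w]
  exact norm_eq_zero.1 this

lemma hasFDeriv_of_two_sided {R : E → ℝ} {q : E → E} {c : ℝ}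
    (h : ∀ x h, |R (x + h) - R x - ⟪q x, h⟫| ≤ c * ‖h‖ ^ 2) (x : E) :
    HasFDerivAt R (innerSL ℝ (q x)) x := by
  rw [hasFDerivAt_iff_isLittleO_nhds_zero]
  have h1 : (fun k => R (x + k) - R x - innerSL ℝ (q x) k) =O[𝓝 0] fun k : E => ‖k‖ ^ 2 := by
    apply Asymptotics.IsBigO.of_bound c
    filter_upwards with k
    simpa using h x k
  exact h1.trans_isLittleO (Asymptotics.isLittleO_norm_pow_id one_lt_two)

lemma lipschitz_of_two_sided {R : E → ℝ} {q : E → E} {c : ℝ} (hc : 0 ≤ c)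
    (h : ∀ x h, |R (x + h) - R x - ⟪q x, h⟫| ≤ c * ‖h‖ ^ 2) :
    LipschitzWith (Real.toNNReal (6 * c)) q := by
  apply LipschitzWith.of_dist_le_mul
  intro x' x
  rw [dist_eq_norm, dist_eq_norm, Real.coe_toNNReal _ (by positivity)]
  set d := x' - x with hd
  set w := q x' - q x with hw
  by_cases hw0 : ‖w‖ = 0
  · rw [hw0]; positivity
  have hwp : 0 < ‖w‖ := lt_of_le_of_ne (norm_nonneg _) (Ne.symm hw0)
  set e := (‖d‖ / ‖w‖) • w with he
  have hen : ‖e‖ = ‖d‖ := by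
    rw [he, norm_smul, Real.norm_eq_abs, abs_of_nonneg (by positivity)]; field_simp
  have hwe : ⟪w, e⟫ = ‖d‖ * ‖w‖ := by
    rw [he, inner_smul_right, real_inner_self_eq_norm_sq]; field_simp
  have k1 := (abs_le.1 (h x' e)).1
  have k2 := (abs_le.1 (h x (d + e))).2
  have k3 := (abs_le.1 (h x d)).1
  have e1 : x + (d + e) = x' + e := by rw [hd]; abel
  have e2 : x + d = x' := by rw [hd]; abel
  rw [e1, inner_add_right] at k2
  rw [e2] at k3
  have k4 : ‖d + e‖ ^ 2 ≤ 4 * ‖d‖ ^ 2 := by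
    have : ‖d + e‖ ≤ ‖d‖ + ‖d‖ := by rw [← hen]; exact (norm_add_le d e).trans (by rw [hen])
    nlinarith [norm_nonneg (d + e)]
  have k5 := mul_le_mul_of_nonneg_left k4 hc
  rw [hw, inner_sub_left] at hwe
  rw [hen] at k1
  have k6 : ‖d‖ * ‖w‖ ≤ ‖d‖ * (6 * c * ‖d‖) := by nlinarith
  by_cases hd0 : ‖d‖ = 0
  · have : x' = x := sub_eq_zero.1 (norm_eq_zero.1 hd0)
    simp [hw, this]
    positivity
  · exact le_of_mul_le_mul_left k6 (lt_of_le_of_ne (norm_nonneg _) (Ne.symm hd0))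

lemma second_order {R : E → ℝ} {q : E → E} {x : E} {X : E →L[ℝ] E}
    (hR : ∀ x, HasFDerivAt R (innerSL ℝ (q x)) x) (hq : HasFDerivAt q X x) :
    ∀ ε > 0, ∀ᶠ h in 𝓝 (0 : E),
      |R (x + h) - R x - ⟪q x, h⟫ - 1 / 2 * ⟪X h, h⟫| ≤ ε * ‖h‖ ^ 2 := by
  intro ε hε
  rw [hasFDerivAt_iff_isLittleO_nhds_zero, Asymptotics.isLittleO_iff] at hq
  obtain ⟨r, hr, hball⟩ := Metric.eventually_nhds_iff.1 (hq hε)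
  rw [Metric.eventually_nhds_iff]
  refine ⟨r, hr, fun h hh => ?_⟩
  rw [dist_zero_right] at hh
  set g : ℝ → ℝ := fun s => R (x + s • h) - s * ⟪q x, h⟫ - s ^ 2 / 2 * ⟪X h, h⟫ with hg
  have hder : ∀ s : ℝ, HasDerivAt g (⟪q (x + s • h), h⟫ - ⟪q x, h⟫ - s * ⟪X h, h⟫) s := by
    intro s
    have d1 : HasDerivAt (fun s : ℝ => x + s • h) h s := by
      simpa using ((hasDerivAt_id s).smul_const h).const_add x
    have d2 := (hR (x + s • h)).comp_hasDerivAt s d1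
    have d3 : HasDerivAt (fun s : ℝ => s * ⟪q x, h⟫) ⟪q x, h⟫ s := by
      simpa using (hasDerivAt_id s).mul_const ⟪q x, h⟫
    have d4 : HasDerivAt (fun s : ℝ => s ^ 2 / 2 * ⟪X h, h⟫) (s * ⟪X h, h⟫) s := by
      have := (((hasDerivAt_id s).pow 2).div_const 2).mul_const ⟪X h, h⟫
      refine this.congr_deriv ?_
      simp only [id]
      push_cast
      ring
    exact (d2.sub d3).sub d4
  have hbound : ∀ s ∈ Ico (0:ℝ) 1, ‖⟪q (x + s • h), h⟫ - ⟪q x, h⟫ - s * ⟪X h, h⟫‖ ≤ ε * ‖h‖ ^ 2 := by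
    intro s hs
    have h1 : ‖s • h‖ ≤ ‖h‖ := by
      rw [norm_smul, Real.norm_eq_abs, abs_of_nonneg hs.1]
      nlinarith [norm_nonneg h, hs.2]
    have h2 := hball (y := s • h) (by rw [dist_zero_right]; linarith)
    have h3 : ⟪q (x + s • h), h⟫ - ⟪q x, h⟫ - s * ⟪X h, h⟫ = ⟪q (x + s • h) - q x - X (s • h), h⟫ := by
      rw [inner_sub_left, inner_sub_left, map_smul, inner_smul_left]; simp
    rw [h3, Real.norm_eq_abs]
    calc |⟪q (x + s • h) - q x - X (s • h), h⟫| ≤ ‖q (x + s • h) - q x - X (s • h)‖ * ‖h‖ :=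
          abs_real_inner_le_norm _ _
      _ ≤ (ε * ‖s • h‖) * ‖h‖ := by gcongr
      _ ≤ (ε * ‖h‖) * ‖h‖ := by gcongr
      _ = ε * ‖h‖ ^ 2 := by ring
  have := norm_image_sub_le_of_norm_deriv_le_segment_01' (f := g)
    (fun s _ => (hder s).hasDerivWithinAt) hbound
  simp only [hg, one_smul, zero_smul, add_zero, Real.norm_eq_abs] at this
  convert this using 2
  ring

/-- lower bound for the second derivative from the one-sided bound. -/
lemma hess_lower {R : E → ℝ} {q : E → E} {x : E} {X : E →L[ℝ] E} {a : ℝ}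
    (hlow : ∀ h, R x + ⟪q x, h⟫ - a * ‖h‖ ^ 2 ≤ R (x + h))
    (hexp : ∀ ε > 0, ∀ᶠ h in 𝓝 (0 : E),
      |R (x + h) - R x - ⟪q x, h⟫ - 1 / 2 * ⟪X h, h⟫| ≤ ε * ‖h‖ ^ 2) (h : E) :
    -(2 * a) * ‖h‖ ^ 2 ≤ ⟪X h, h⟫ := by
  have key : ∀ ε > 0, -(2 * a) * ‖h‖ ^ 2 ≤ ⟪X h, h⟫ + 2 * ε * ‖h‖ ^ 2 := by
    intro ε hε
    have ht : Tendsto (fun t : ℝ => t • h) (𝓝[>] 0) (𝓝 0) := by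
      have : Tendsto (fun t : ℝ => t • h) (𝓝 0) (𝓝 ((0:ℝ) • h)) :=
        Continuous.tendsto (by fun_prop) _
      rw [zero_smul] at this
      exact this.mono_left nhdsWithin_le_nhds
    obtain ⟨t, ht1, ht2⟩ := ((ht.eventually (hexp ε hε)).and self_mem_nhdsWithin).exists
    have htpos : 0 < t := ht2
    have k1 := (abs_le.1 ht1).2
    have k2 := hlow (t • h)
    rw [map_smul, inner_smul_left, inner_smul_right, inner_smul_right, norm_smul, mul_pow, Real.norm_eq_abs, sq_abs] at k1
    rw [inner_smul_right, norm_smul, mul_pow, Real.norm_eq_abs, sq_abs] at k2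
    simp only [conj_trivial] at k1
    have : t ^ 2 * (-(2 * a) * ‖h‖ ^ 2) ≤ t ^ 2 * (⟪X h, h⟫ + 2 * ε * ‖h‖ ^ 2) := by nlinarith
    exact le_of_mul_le_mul_left this (by positivity)
  have hlim : Tendsto (fun ε : ℝ => ⟪X h, h⟫ + 2 * ε * ‖h‖ ^ 2) (𝓝[>] 0)
      (𝓝 (⟪X h, h⟫ + 2 * 0 * ‖h‖ ^ 2)) := by
    apply Tendsto.mono_left _ nhdsWithin_le_nhds
    apply Continuous.tendsto (f := fun ε : ℝ => ⟪X h, h⟫ + 2 * ε * ‖h‖ ^ 2)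
    fun_prop
  have := ge_of_tendsto hlim (by filter_upwards [self_mem_nhdsWithin] with ε hε using key ε hε)
  simpa using this

/-- first and second order conditions at the max. -/
lemma hess_max {R₁ R₂ : E → ℝ} {q₁ q₂ p₁ p₂ x y : E} {X Y : E →L[ℝ] E} {α : ℝ}
    (hq₁ : q₁ = α • (x - y) + p₁) (hq₂ : q₂ = -(α • (x - y)) + p₂)
    (hmax : ∀ x' y', R₁ x' + R₂ y' - α / 2 * ‖x' - y'‖ ^ 2 - ⟪p₁, x'⟫ - ⟪p₂, y'⟫ ≤
      R₁ x + R₂ y - α / 2 * ‖x - y‖ ^ 2 - ⟪p₁, x⟫ - ⟪p₂, y⟫)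
    (hX : ∀ ε > 0, ∀ᶠ h in 𝓝 (0 : E),
      |R₁ (x + h) - R₁ x - ⟪q₁, h⟫ - 1 / 2 * ⟪X h, h⟫| ≤ ε * ‖h‖ ^ 2)
    (hY : ∀ ε > 0, ∀ᶠ h in 𝓝 (0 : E),
      |R₂ (y + h) - R₂ y - ⟪q₂, h⟫ - 1 / 2 * ⟪Y h, h⟫| ≤ ε * ‖h‖ ^ 2) (h k : E) :
    ⟪X h, h⟫ + ⟪Y k, k⟫ ≤ α * ‖h - k‖ ^ 2 := by
  have ht : ∀ h : E, Tendsto (fun t : ℝ => t • h) (𝓝[>] 0) (𝓝 0) := by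
    intro h
    have : Tendsto (fun t : ℝ => t • h) (𝓝 0) (𝓝 ((0:ℝ) • h)) :=
      Continuous.tendsto (by fun_prop) _
    rw [zero_smul] at this
    exact this.mono_left nhdsWithin_le_nhds
  have key : ∀ ε > 0, ⟪X h, h⟫ + ⟪Y k, k⟫ ≤ α * ‖h - k‖ ^ 2 + 2 * ε * (‖h‖ ^ 2 + ‖k‖ ^ 2) := by
    intro ε hε
    obtain ⟨t, ⟨ht1, ht3⟩, ht2⟩ := ((((ht h).eventually (hX ε hε)).and
      ((ht k).eventually (hY ε hε))).and self_mem_nhdsWithin).exists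
    have htpos : 0 < t := ht2
    have k1 := (abs_le.1 ht1).1
    have k2 := (abs_le.1 ht3).1
    have k3 := hmax (x + t • h) (y + t • k)
    have e1 : x + t • h - (y + t • k) = (x - y) + t • (h - k) := by rw [smul_sub]; abel
    have f1 : ⟪q₁, h⟫ = α * ⟪x - y, h⟫ + ⟪p₁, h⟫ := by
      rw [hq₁, inner_add_left, inner_smul_left]; simp
    have f2 : ⟪q₂, k⟫ = -(α * ⟪x - y, k⟫) + ⟪p₂, k⟫ := by
      rw [hq₂, inner_add_left, inner_neg_left, inner_smul_left]; simp
    rw [e1, aux_norm_add_sq, inner_smul_right, norm_smul, mul_pow, Real.norm_eq_abs, sq_abs,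
      inner_add_right, inner_add_right, inner_smul_right, inner_smul_right, inner_sub_right (x - y)] at k3
    rw [map_smul, inner_smul_left, inner_smul_right, inner_smul_right, norm_smul, mul_pow, Real.norm_eq_abs, sq_abs] at k1 k2
    simp only [conj_trivial] at k1 k2
    rw [f1] at k1
    rw [f2] at k2
    have : t ^ 2 * (⟪X h, h⟫ + ⟪Y k, k⟫) ≤ t ^ 2 * (α * ‖h - k‖ ^ 2 + 2 * ε * (‖h‖ ^ 2 + ‖k‖ ^ 2)) := by
      linear_combination 2 * k1 + 2 * k2 + 2 * k3
    exact le_of_mul_le_mul_left this (by positivity)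
  have hlim : Tendsto (fun ε : ℝ => α * ‖h - k‖ ^ 2 + 2 * ε * (‖h‖ ^ 2 + ‖k‖ ^ 2)) (𝓝[>] 0)
      (𝓝 (α * ‖h - k‖ ^ 2 + 2 * 0 * (‖h‖ ^ 2 + ‖k‖ ^ 2))) := by
    apply Tendsto.mono_left _ nhdsWithin_le_nhds
    apply Continuous.tendsto (f := fun ε : ℝ => α * ‖h - k‖ ^ 2 + 2 * ε * (‖h‖ ^ 2 + ‖k‖ ^ 2))
    fun_prop
  have := ge_of_tendsto hlim (by filter_upwards [self_mem_nhdsWithin] with ε hε using key ε hε)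
  simpa using this

open MeasureTheory Module in
/-- Jensen's lemma for `C^{1,1}` functions. -/
lemma jensen [FiniteDimensional ℝ E] {R₁ R₂ : E → ℝ} {q₁ q₂ : E → E} {c C κ α r : ℝ} (hc : 0 ≤ c)
    (hκ : 0 < κ) (hα : 0 ≤ α) (hr : 0 < r)
    (hR₁ : ∀ x h, |R₁ (x + h) - R₁ x - ⟪q₁ x, h⟫| ≤ c * ‖h‖ ^ 2)
    (hR₂ : ∀ x h, |R₂ (x + h) - R₂ x - ⟪q₂ x, h⟫| ≤ c * ‖h‖ ^ 2)
    (hC₁ : ∀ x, R₁ x ≤ C - κ * ‖x‖ ^ 2) (hC₂ : ∀ x, R₂ x ≤ C - κ * ‖x‖ ^ 2) :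
    ∃ x y p₁ p₂ : E, ‖p₁‖ < r ∧ ‖p₂‖ < r ∧
      (∀ x' y', R₁ x' + R₂ y' - α / 2 * ‖x' - y'‖ ^ 2 - ⟪p₁, x'⟫ - ⟪p₂, y'⟫ ≤
        R₁ x + R₂ y - α / 2 * ‖x - y‖ ^ 2 - ⟪p₁, x⟫ - ⟪p₂, y⟫) ∧
      q₁ x = α • (x - y) + p₁ ∧ q₂ y = -(α • (x - y)) + p₂ ∧
      DifferentiableAt ℝ q₁ x ∧ DifferentiableAt ℝ q₂ y := by
  have : ProperSpace E := FiniteDimensional.proper ℝ E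
  have hl₁ := lipschitz_of_two_sided hc hR₁
  have hl₂ := lipschitz_of_two_sided hc hR₂
  set L := Real.toNNReal (6 * c)
  have hd₁ := hasFDeriv_of_two_sided hR₁
  have hd₂ := hasFDeriv_of_two_sided hR₂
  have hcont₁ : Continuous R₁ := continuous_iff_continuousAt.2 fun x => (hd₁ x).continuousAt
  have hcont₂ : Continuous R₂ := continuous_iff_continuousAt.2 fun x => (hd₂ x).continuousAt
  -- existence of maximizers
  have hex : ∀ p : E × E, ∃ z : E × E, ∀ z' : E × E,
      R₁ z'.1 + R₂ z'.2 - α / 2 * ‖z'.1 - z'.2‖ ^ 2 - ⟪p.1, z'.1⟫ - ⟪p.2, z'.2⟫ ≤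
        R₁ z.1 + R₂ z.2 - α / 2 * ‖z.1 - z.2‖ ^ 2 - ⟪p.1, z.1⟫ - ⟪p.2, z.2⟫ := by
    intro p
    set F : E × E → ℝ := fun z' =>
      R₁ z'.1 + R₂ z'.2 - α / 2 * ‖z'.1 - z'.2‖ ^ 2 - ⟪p.1, z'.1⟫ - ⟪p.2, z'.2⟫ with hF
    have hFc : Continuous F := by fun_prop
    apply hFc.exists_forall_ge'  (x₀ := 0)
    -- bound
    have hb : ∀ z : E × E, F z ≤ 2 * C + ‖p‖ ^ 2 / κ - κ / 2 * ‖z‖ ^ 2 := by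
      intro z
      have b1 : -⟪p.1, z.1⟫ ≤ ‖p‖ * ‖z.1‖ := by
        have := (abs_le.1 (abs_real_inner_le_norm p.1 z.1)).1
        have h2 : ‖p.1‖ * ‖z.1‖ ≤ ‖p‖ * ‖z.1‖ := by gcongr; exact norm_fst_le p
        linarith
      have b2 : -⟪p.2, z.2⟫ ≤ ‖p‖ * ‖z.2‖ := by
        have := (abs_le.1 (abs_real_inner_le_norm p.2 z.2)).1
        have h2 : ‖p.2‖ * ‖z.2‖ ≤ ‖p‖ * ‖z.2‖ := by gcongr; exact norm_snd_le p
        linarith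
      have b3 : ∀ t : ℝ, ‖p‖ * t ≤ κ / 2 * t ^ 2 + ‖p‖ ^ 2 / (2 * κ) := by
        intro t
        have : κ / 2 * t ^ 2 + ‖p‖ ^ 2 / (2 * κ) - ‖p‖ * t = (κ * t - ‖p‖) ^ 2 / (2 * κ) := by
          field_simp; ring
        have h3 : 0 ≤ (κ * t - ‖p‖) ^ 2 / (2 * κ) := by positivity
        linarith
      have b4 : ‖z‖ ^ 2 ≤ ‖z.1‖ ^ 2 + ‖z.2‖ ^ 2 := by
        rcases max_choice ‖z.1‖ ‖z.2‖ with hm | hm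
        · rw [Prod.norm_def, hm]; nlinarith [sq_nonneg ‖z.2‖]
        · rw [Prod.norm_def, hm]; nlinarith [sq_nonneg ‖z.1‖]
      have b5 : 0 ≤ α / 2 * ‖z.1 - z.2‖ ^ 2 := by positivity
      have b6 := b3 ‖z.1‖
      have b7 := b3 ‖z.2‖
      have b8 : ‖p‖ ^ 2 / κ = ‖p‖ ^ 2 / (2 * κ) + ‖p‖ ^ 2 / (2 * κ) := by field_simp; ring
      have b9 := mul_le_mul_of_nonneg_left b4 (by positivity : 0 ≤ κ / 2)
      simp only [hF]
      rw [b8]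
      linarith [hC₁ z.1, hC₂ z.2]
    have htend : Tendsto (fun z : E × E => 2 * C + ‖p‖ ^ 2 / κ - κ / 2 * ‖z‖ ^ 2) (cocompact (E × E)) atBot := by
      have h1 : Tendsto (fun z : E × E => ‖z‖) (cocompact (E × E)) atTop := tendsto_norm_cocompact_atTop
      have h2 : Tendsto (fun z : E × E => κ / 2 * ‖z‖ ^ 2) (cocompact (E × E)) atTop :=
        ((tendsto_pow_atTop two_ne_zero).comp h1).const_mul_atTop (by positivity)
      simp_rw [sub_eq_add_neg]
      exact tendsto_atBot_add_const_left _ _ (tendsto_neg_atTop_atBot.comp h2)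
    filter_upwards [htend.eventually (eventually_le_atBot (F 0))] with z hz
    exact (hb z).trans hz
  -- gradient conditions
  have hgrad : ∀ (p₁ p₂ x y : E), (∀ x' y', R₁ x' + R₂ y' - α / 2 * ‖x' - y'‖ ^ 2 - ⟪p₁, x'⟫ - ⟪p₂, y'⟫ ≤
        R₁ x + R₂ y - α / 2 * ‖x - y‖ ^ 2 - ⟪p₁, x⟫ - ⟪p₂, y⟫) →
      q₁ x = α • (x - y) + p₁ ∧ q₂ y = -(α • (x - y)) + p₂ := by
    intro p₁ p₂ x y hm
    constructor
    · have : q₁ x - α • (x - y) - p₁ = 0 := by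
        apply eq_zero_of_inner_le (C := c + α / 2)
        intro k
        have k1 := hm (x + k) y
        have k2 := (abs_le.1 (hR₁ x k)).1
        have e : x + k - y = (x - y) + k := by abel
        rw [e, aux_norm_add_sq, inner_add_right] at k1
        rw [inner_sub_left, inner_sub_left, inner_smul_left]
        simp only [conj_trivial]
        linarith
      rw [← sub_eq_zero, ← this]; abel
    · have : q₂ y + α • (x - y) - p₂ = 0 := by
        apply eq_zero_of_inner_le (C := c + α / 2)
        intro k
        have k1 := hm x (y + k)
        have k2 := (abs_le.1 (hR₂ y k)).1
        have e : x - (y + k) = (x - y) - k := by abel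
        rw [e, aux_norm_sub_sq (x - y), inner_add_right] at k1
        rw [inner_sub_left, inner_add_left, inner_smul_left]
        simp only [conj_trivial]
        linarith
      rw [← sub_eq_zero, ← this]; abel
  -- measure
  letI : MeasurableSpace (E × E) := borel (E × E)
  haveI : BorelSpace (E × E) := ⟨rfl⟩
  set μ : Measure (E × E) := μH[finrank ℝ (E × E)] with hμ
  set F : E × E → E × E := fun z => (q₁ z.1, q₂ z.2) with hFdef
  have hFl : LipschitzWith L F := by
    have a1 : LipschitzWith (L * 1) (fun z : E × E => q₁ z.1) := hl₁.comp LipschitzWith.prod_fst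
    have a2 : LipschitzWith (L * 1) (fun z : E × E => q₂ z.2) := hl₂.comp LipschitzWith.prod_snd
    have := a1.prodMk a2
    simpa using this
  have hae : ∀ᵐ z ∂μ, DifferentiableAt ℝ F z := hFl.ae_differentiableAt
  set G : E × E → E × E := fun z => (q₁ z.1 - α • (z.1 - z.2), q₂ z.2 + α • (z.1 - z.2)) with hG
  obtain ⟨LG, hGl⟩ : ∃ LG, LipschitzWith LG G := by
    have h1 : LipschitzWith (1 + 1) (fun z : E × E => z.1 - z.2) :=
      LipschitzWith.prod_fst.sub LipschitzWith.prod_snd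
    have h2 : LipschitzWith (‖α‖₊ * (1 + 1)) (fun z : E × E => α • (z.1 - z.2)) :=
      (lipschitzWith_smul α).comp h1
    have a1 : LipschitzWith (L * 1) (fun z : E × E => q₁ z.1) := hl₁.comp LipschitzWith.prod_fst
    have a2 : LipschitzWith (L * 1) (fun z : E × E => q₂ z.2) := hl₂.comp LipschitzWith.prod_snd
    exact ⟨_, (a1.sub h2).prodMk (a2.add h2)⟩
  set N : Set (E × E) := {z | ¬ DifferentiableAt ℝ F z} with hN
  have hN0 : μ N = 0 := hae
  have hGN : μ (G '' N) = 0 := by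
    have := (hGl.lipschitzOnWith (s := N)).hausdorffMeasure_image_le
      (d := (finrank ℝ (E × E) : ℝ)) (by positivity)
    rw [← hμ, hN0, mul_zero] at this
    exact le_antisymm this (zero_le)
  have hpos : 0 < μ (Metric.ball 0 r) := Metric.isOpen_ball.measure_pos μ ⟨0, by simpa using hr⟩
  obtain ⟨p, hpb, hpN⟩ : ∃ p ∈ Metric.ball (0 : E × E) r, p ∉ G '' N := by
    by_contra hcon
    push Not at hcon
    have : μ (Metric.ball 0 r) ≤ μ (G '' N) := measure_mono hcon
    rw [hGN] at this
    exact absurd hpos (not_lt.2 this)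
  obtain ⟨z, hz⟩ := hex p
  have hz' : ∀ x' y', R₁ x' + R₂ y' - α / 2 * ‖x' - y'‖ ^ 2 - ⟪p.1, x'⟫ - ⟪p.2, y'⟫ ≤
        R₁ z.1 + R₂ z.2 - α / 2 * ‖z.1 - z.2‖ ^ 2 - ⟪p.1, z.1⟫ - ⟪p.2, z.2⟫ :=
    fun x' y' => hz (x', y')
  obtain ⟨g1, g2⟩ := hgrad p.1 p.2 z.1 z.2 hz'
  have hGz : G z = p := by
    simp only [hG, g1, g2]
    ext <;> simp
  have hdiff : DifferentiableAt ℝ F z := by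
    by_contra hcon
    exact hpN ⟨z, hcon, hGz⟩
  rw [Metric.mem_ball, dist_zero_right] at hpb
  refine ⟨z.1, z.2, p.1, p.2, (norm_fst_le p).trans_lt hpb, (norm_snd_le p).trans_lt hpb, hz', g1, g2, ?_, ?_⟩
  · have : DifferentiableAt ℝ (fun x : E => (F (x, z.2)).1) z.1 := by
      have h1 : DifferentiableAt ℝ (fun x : E => (x, z.2)) z.1 := by fun_prop
      have h2 : DifferentiableAt ℝ (fun x : E => F (x, z.2)) z.1 :=
        DifferentiableAt.comp (g := F) z.1 hdiff h1
      exact h2.fst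
    exact this
  · have : DifferentiableAt ℝ (fun y : E => (F (z.1, y)).2) z.2 := by
      have h1 : DifferentiableAt ℝ (fun y : E => (z.1, y)) z.2 := by fun_prop
      have h2 : DifferentiableAt ℝ (fun y : E => F (z.1, y)) z.2 :=
        DifferentiableAt.comp (g := F) z.2 hdiff h1
      exact h2.snd
    exact this

end Abstract3

section Abstract4
variable {E : Type*} [NormedAddCommGroup E] [InnerProductSpace ℝ E] [FiniteDimensional ℝ E]

/-- Summary of the double regularization. -/
lemma lasry_lions {O : Set E} (hO : IsCompact O) (hne : O.Nonempty) {u : E → ℝ}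
    (hu : UpperSemicontinuousOn u O) {a α b δ : ℝ} (ha : 0 < a) (hα : 0 < α)
    (hδ : 0 < δ) (hb : 4 * (α + 1) + 2 * a + (α + 4 * a) ^ 2 / δ ≤ b) :
    ∃ (R : E → ℝ) (q : E → E), (∀ x ∈ O, u x ≤ R x) ∧
      (∀ x, ∃ z ∈ O, R x ≤ u z - a / 2 * ‖x - z‖ ^ 2) ∧
      (∀ x h, |R (x + h) - R x - ⟪q x, h⟫| ≤ b / 2 * ‖h‖ ^ 2) ∧
      (∀ x h, R x + ⟪q x, h⟫ - a * ‖h‖ ^ 2 ≤ R (x + h)) ∧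
      (∀ x (X : E →L[ℝ] E), (∀ h, -(2 * a) * ‖h‖ ^ 2 ≤ ⟪X h, h⟫) →
        (∀ h, ⟪X h, h⟫ ≤ α * ‖h‖ ^ 2) →
        (∀ ε > 0, ∀ᶠ h in 𝓝 (0 : E),
          |R (x + h) - R x - ⟪q x, h⟫ - 1 / 2 * ⟪X h, h⟫| ≤ ε * ‖h‖ ^ 2) →
        ∃ z ∈ O, R x ≤ u z - a / 2 * ‖x - z‖ ^ 2 ∧
          ∀ᶠ k in 𝓝 (0 : E), z + k ∈ O →
            u (z + k) ≤ u z + ⟪q x, k⟫ + 1 / 2 * ⟪X k, k⟫ + δ * ‖k‖ ^ 2) := by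
  have hfrac : 0 ≤ (α + 4 * a) ^ 2 / δ := by positivity
  have hb2 : 2 * a ≤ b := by nlinarith
  obtain ⟨S, h1, h2⟩ := exists_supconv hO hne hu a
  choose y hy using fun x => exists_infconv hne ha hb2 h1 h2 x
  set R : E → ℝ := fun x => S (y x) + b / 2 * ‖x - y x‖ ^ 2 with hRdef
  have hR : ∀ x, R x = S (y x) + b / 2 * ‖x - y x‖ ^ 2 := fun x => rfl
  have hRle : ∀ x y', R x ≤ S y' + b / 2 * ‖x - y'‖ ^ 2 := fun x y' => hy x y'
  have hup := infconv_upper hR hRle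
  have hlow := infconv_lower ha hb2 h1 h2 hR hRle
  refine ⟨R, fun x => b • (x - y x), ?_, ?_, ?_, hlow, ?_⟩
  · intro x hx
    have := h1 (y x) x hx
    rw [norm_sub_rev] at this
    rw [hR]
    nlinarith [mul_le_mul_of_nonneg_right hb2 (sq_nonneg ‖x - y x‖), mul_nonneg ha.le (sq_nonneg ‖x - y x‖)]
  · intro x
    obtain ⟨z, hz, hS⟩ := h2 x
    refine ⟨z, hz, ?_⟩
    have := hRle x x
    rw [sub_self, norm_zero] at this
    rw [← hS]; linarith
  · intro x h
    rw [abs_le]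
    constructor
    · have := hlow x h
      nlinarith [mul_le_mul_of_nonneg_right hb2 (sq_nonneg ‖h‖)]
    · have := hup x h
      linarith
  · intro x X hXl hXu hexp
    apply transfer_u ha hα hδ hb h1 h2 hR hRle x hXl hXu
    intro ε hε
    filter_upwards [hexp ε hε] with h hh
    have := (abs_le.1 hh).2
    linarith

lemma aux_young {a r t : ℝ} (ha : 0 < a) : r * t ≤ a / 4 * t ^ 2 + r ^ 2 / a := by
  have : a / 4 * t ^ 2 + r ^ 2 / a - r * t = (a * t / 2 - r) ^ 2 / a := by
    field_simp; ring
  have h3 : 0 ≤ (a * t / 2 - r) ^ 2 / a := by positivity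
  linarith

lemma aux_wyoung {s : ℝ} (hs0 : 0 < s) (x D : E) :
    ‖x - D‖ ^ 2 ≤ (1 + s) * ‖x‖ ^ 2 + (1 + 1 / s) * ‖D‖ ^ 2 := by
  rw [aux_norm_sub_sq x]
  have h3 : 0 ≤ ‖s • x + D‖ ^ 2 / s := by positivity
  rw [aux_norm_add_sq, inner_smul_left, norm_smul, mul_pow, Real.norm_eq_abs, sq_abs] at h3
  simp only [conj_trivial] at h3
  have h4 : (s ^ 2 * ‖x‖ ^ 2 + 2 * (s * ⟪x, D⟫) + ‖D‖ ^ 2) / s =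
    s * ‖x‖ ^ 2 + 2 * ⟪x, D⟫ + 1 / s * ‖D‖ ^ 2 := by field_simp
  rw [h4] at h3
  linarith

set_option maxHeartbeats 4000000 in
/-- Theorem on sums. -/
theorem sums_thm {O : Set E} (hO : IsCompact O) (hne : O.Nonempty) {u v : E → ℝ}
    (hu : UpperSemicontinuousOn u O) (hv : UpperSemicontinuousOn v O) {α δ : ℝ} (hα : 0 < α)
    (hδ : 0 < δ) :
    ∃ z ∈ O, ∃ w ∈ O, ∃ (q₁ q₂ : E) (X Y : E →L[ℝ] E),
      (∀ z' ∈ O, ∀ w' ∈ O, u z' + v w' - α / 2 * ‖z' - w'‖ ^ 2 ≤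
        u z + v w - α / 2 * ‖z - w‖ ^ 2 + δ) ∧
      ‖q₁ - α • (z - w)‖ ≤ δ ∧ ‖q₂ + α • (z - w)‖ ≤ δ ∧
      (∀ᶠ k in 𝓝 (0 : E), z + k ∈ O →
        u (z + k) ≤ u z + ⟪q₁, k⟫ + 1 / 2 * ⟪X k, k⟫ + δ * ‖k‖ ^ 2) ∧
      (∀ᶠ k in 𝓝 (0 : E), w + k ∈ O →
        v (w + k) ≤ v w + ⟪q₂, k⟫ + 1 / 2 * ⟪Y k, k⟫ + δ * ‖k‖ ^ 2) ∧
      (∀ h k, ⟪X h, h⟫ + ⟪Y k, k⟫ ≤ α * ‖h - k‖ ^ 2 + δ * (‖h‖ ^ 2 + ‖k‖ ^ 2)) := by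
  -- bounds
  obtain ⟨ρ', hρ'⟩ := hO.isBounded.exists_norm_le
  set ρ := max ρ' 1 with hρdef
  have hρ1 : 1 ≤ ρ := le_max_right _ _
  have hρ : ∀ z ∈ O, ‖z‖ ≤ ρ := fun z hz => (hρ' z hz).trans (le_max_left _ _)
  obtain ⟨zu, hzu, hmu⟩ := hu.exists_isMaxOn hne hO
  obtain ⟨zv, hzv, hmv⟩ := hv.exists_isMaxOn hne hO
  have hCu : ∀ z ∈ O, u z ≤ |u zu| + |v zv| := by
    intro z hz
    have : u z ≤ u zu := hmu hz
    have := le_abs_self (u zu); have := abs_nonneg (v zv); linarith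
  have hCv : ∀ z ∈ O, v z ≤ |u zu| + |v zv| := by
    intro z hz
    have : v z ≤ v zv := hmv hz
    have := le_abs_self (v zv); have := abs_nonneg (u zu); linarith
  set C0 := |u zu| + |v zv|
  -- constants
  set η := δ / (16 * (α + 1)) with hη
  have hη0 : 0 < η := by positivity
  have hηα : 4 * α * η ≤ δ / 4 := by
    have : (α + 1) * η = δ / 16 := by rw [hη]; field_simp
    nlinarith
  set δ₁ := min δ (η ^ 2 / 8) with hδ₁
  have hδ₁0 : 0 < δ₁ := by positivity
  have hδ₁a : δ₁ ≤ δ := min_le_left _ _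
  have hδ₁b : δ₁ ≤ η ^ 2 / 8 := min_le_right _ _
  set s := min 1 (min (δ / (8 * α * ρ)) (δ₁ / (8 * α * ρ ^ 2))) with hs
  have hs0 : 0 < s := by positivity
  have hs1 : s ≤ 1 := min_le_left _ _
  have hs2 : 2 * s * α * ρ ≤ δ / 4 := by
    have : s ≤ δ / (8 * α * ρ) := (min_le_right _ _).trans (min_le_left _ _)
    rw [le_div_iff₀ (by positivity)] at this
    linarith
  have hs3 : 2 * s * α * ρ ^ 2 ≤ δ₁ / 4 := by
    have : s ≤ δ₁ / (8 * α * ρ ^ 2) := (min_le_right _ _).trans (min_le_right _ _)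
    rw [le_div_iff₀ (by positivity)] at this
    linarith
  have hs4 : 2 * s * α ≤ δ := by
    have : 2 * s * α * 1 ≤ 2 * s * α * ρ := by gcongr
    linarith
  set a := 1 + 8 * α * (1 + 1 / s) with hadef
  have ha1 : 1 ≤ a := by
    have : 0 ≤ 8 * α * (1 + 1 / s) := by positivity
    linarith
  have ha : 0 < a := by linarith
  have ha2 : 8 * α * (1 + 1 / s) ≤ a := by linarith
  set b := 4 * (2 * α + 1) + 2 * a + (2 * α + 4 * a) ^ 2 / δ with hbdef
  have hb0 : 0 < b := by positivity
  set r := min (δ / 4) (min 1 (δ₁ / (4 * (4 * ρ + 2)))) with hrdef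
  have hr0 : 0 < r := by positivity
  have hr1 : r ≤ 1 := (min_le_right _ _).trans (min_le_left _ _)
  have hrδ : r ≤ δ / 4 := min_le_left _ _
  have hr2 : 4 * ρ * r + 2 * r ≤ δ₁ / 4 := by
    have : r ≤ δ₁ / (4 * (4 * ρ + 2)) := (min_le_right _ _).trans (min_le_right _ _)
    rw [le_div_iff₀ (by positivity)] at this
    linarith
  have hr3 : r ^ 2 / a ≤ r := by
    rw [div_le_iff₀ ha]; nlinarith
  obtain ⟨R₁, q₁, A1, A2, A3, A4, A5⟩ := lasry_lions hO hne hu ha (by positivity : 0 < 2 * α) hδ hbdef.ge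
  obtain ⟨R₂, q₂, B1, B2, B3, B4, B5⟩ := lasry_lions hO hne hv ha (by positivity : 0 < 2 * α) hδ hbdef.ge
  clear_value s η δ₁ a b r ρ C0
  -- near maximum
  obtain ⟨z0, hz0, w0, hw0, hnear⟩ : ∃ z0 ∈ O, ∃ w0 ∈ O, ∀ z' ∈ O, ∀ w' ∈ O,
      u z' + v w' - α / 2 * ‖z' - w'‖ ^ 2 ≤ u z0 + v w0 - α / 2 * ‖z0 - w0‖ ^ 2 + δ₁ / 4 := by
    set V : Set ℝ := (fun p : E × E => u p.1 + v p.2 - α / 2 * ‖p.1 - p.2‖ ^ 2) '' (O ×ˢ O) with hV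
    have hVne : V.Nonempty := (hne.prod hne).image _
    have hVb : BddAbove V := by
      refine ⟨C0 + C0, ?_⟩
      rintro _ ⟨p, hp, rfl⟩
      have h0 : 0 ≤ α / 2 * ‖p.1 - p.2‖ ^ 2 := by positivity
      have := hCu p.1 hp.1
      have := hCv p.2 hp.2
      simp only
      linarith
    obtain ⟨_, ⟨p, hp, rfl⟩, hlt⟩ := exists_lt_of_lt_csSup hVne
      (show sSup V - δ₁ / 4 < sSup V by linarith)
    refine ⟨p.1, hp.1, p.2, hp.2, fun z' hz' w' hw' => ?_⟩
    have := le_csSup hVb ⟨(z', w'), ⟨hz', hw'⟩, rfl⟩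
    simp only at this hlt
    linarith
  -- coercivity
  have hco : ∀ (u R : E → ℝ), (∀ z ∈ O, u z ≤ C0) → (∀ x, ∃ z ∈ O, R x ≤ u z - a / 2 * ‖x - z‖ ^ 2) →
      ∀ x, R x ≤ (C0 + a / 2 * ρ ^ 2) - a / 4 * ‖x‖ ^ 2 := by
    intro u R hu hR x
    obtain ⟨z, hz, h⟩ := hR x
    have h1 := hu z hz
    have h2 : ‖x‖ ^ 2 ≤ 2 * ‖x - z‖ ^ 2 + 2 * ρ ^ 2 := by
      have t1 : ‖x‖ ≤ ‖x - z‖ + ‖z‖ := by simpa using norm_add_le (x - z) z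
      have t2 := hρ z hz
      have t3 : ‖x‖ ≤ ‖x - z‖ + ρ := by linarith
      have t4 : ‖x‖ ^ 2 ≤ (‖x - z‖ + ρ) ^ 2 := by gcongr
      nlinarith [sq_nonneg (‖x - z‖ - ρ)]
    nlinarith [mul_le_mul_of_nonneg_left h2 ha.le]
  have hα' : 0 ≤ (1 + s) * α := by positivity
  obtain ⟨x, y, p₁, p₂, hp₁, hp₂, hmax, hg₁, hg₂, hD₁, hD₂⟩ :=
    jensen (c := b / 2) (by positivity) (by positivity : 0 < a / 4) hα' hr0 A3 B3
      (hco u R₁ hCu A2) (hco v R₂ hCv B2)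
  set X := fderiv ℝ q₁ x with hX
  set Y := fderiv ℝ q₂ y with hY
  have hexpX := second_order (hasFDeriv_of_two_sided A3) hD₁.hasFDerivAt
  have hexpY := second_order (hasFDeriv_of_two_sided B3) hD₂.hasFDerivAt
  rw [← hX] at hexpX
  rw [← hY] at hexpY
  have hXY := hess_max hg₁ hg₂ hmax hexpX hexpY
  have hXl := hess_lower (A4 x) hexpX
  have hYl := hess_lower (B4 y) hexpY
  have hXu : ∀ h, ⟪X h, h⟫ ≤ 2 * α * ‖h‖ ^ 2 := by
    intro h
    have := hXY h 0
    simp only [map_zero, inner_zero_left, add_zero, sub_zero] at this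
    have h2 : (1 + s) * α * ‖h‖ ^ 2 ≤ (1 + 1) * α * ‖h‖ ^ 2 := by gcongr
    linarith
  have hYu : ∀ h, ⟪Y h, h⟫ ≤ 2 * α * ‖h‖ ^ 2 := by
    intro h
    have := hXY 0 h
    simp only [map_zero, inner_zero_left, zero_add, zero_sub, norm_neg] at this
    have h2 : (1 + s) * α * ‖h‖ ^ 2 ≤ (1 + 1) * α * ‖h‖ ^ 2 := by gcongr
    linarith
  obtain ⟨z, hz, hzR, hzt⟩ := A5 x X hXl hXu hexpX
  obtain ⟨w, hw, hwR, hwt⟩ := B5 y Y hYl hYu hexpY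
  -- chain
  have hdd : ∀ z ∈ O, ∀ w ∈ O, ‖z - w‖ ≤ 2 * ρ := by
    intro z hz w hw
    have := norm_sub_le z w
    have := hρ z hz
    have := hρ w hw
    linarith
  have hin : ∀ (p x z z0 : E), ‖p‖ < r → z ∈ O → z0 ∈ O →
      ⟪p, z0⟫ - ⟪p, x⟫ ≤ a / 4 * ‖x - z‖ ^ 2 + r ^ 2 / a + 2 * ρ * r := by
    intro p x z z0 hp hz hz0
    rw [← inner_sub_right]
    have t1 := real_inner_le_norm p (z0 - x)
    rw [norm_sub_rev z0 x] at t1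
    have t2 : ‖x - z0‖ ≤ ‖x - z‖ + ‖z - z0‖ := by
      simpa using norm_add_le (x - z) (z - z0)
    have t3 := hdd z hz z0 hz0
    have t4 : ‖p‖ * ‖x - z0‖ ≤ r * (‖x - z‖ + 2 * ρ) := by
      gcongr
      linarith
    have t5 : r * ‖x - z‖ ≤ a / 4 * ‖x - z‖ ^ 2 + r ^ 2 / a := aux_young ha
    linarith
  have i1 := hin p₁ x z z0 hp₁ hz hz0
  have i2 := hin p₂ y w w0 hp₂ hw hw0
  have m1 := hmax z0 w0
  have m2 := A1 z0 hz0
  have m3 := B1 w0 hw0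
  have m4 : s * α / 2 * ‖z0 - w0‖ ^ 2 ≤ 2 * s * α * ρ ^ 2 := by
    have h1 := hdd z0 hz0 w0 hw0
    have h2 : ‖z0 - w0‖ ^ 2 ≤ (2 * ρ) ^ 2 := by gcongr
    have h3 : s * α / 2 * ‖z0 - w0‖ ^ 2 ≤ s * α / 2 * (2 * ρ) ^ 2 := by gcongr
    linarith
  have m5 : α / 2 * ‖z - w‖ ^ 2 ≤ (1 + s) * α / 2 * ‖x - y‖ ^ 2 +
      a / 8 * (‖x - z‖ ^ 2 + ‖y - w‖ ^ 2) := by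
    set D := (x - z) - (y - w) with hD
    have e1 : z - w = (x - y) - D := by rw [hD]; abel
    have h1 : ‖D‖ ^ 2 ≤ 2 * (‖x - z‖ ^ 2 + ‖y - w‖ ^ 2) := by
      have h3 : 0 ≤ ‖(x - z) + (y - w)‖ ^ 2 := by positivity
      rw [aux_norm_add_sq] at h3
      rw [hD, aux_norm_sub_sq (x - z)]; linarith
    have h2 : ‖z - w‖ ^ 2 ≤ (1 + s) * ‖x - y‖ ^ 2 + (1 + 1 / s) * ‖D‖ ^ 2 := by
      rw [e1]
      exact aux_wyoung hs0 _ _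
    have h5 : (1 + 1 / s) * ‖D‖ ^ 2 ≤ (1 + 1 / s) * (2 * (‖x - z‖ ^ 2 + ‖y - w‖ ^ 2)) := by gcongr
    have h6 : 8 * α * (1 + 1 / s) * (‖x - z‖ ^ 2 + ‖y - w‖ ^ 2) ≤ a * (‖x - z‖ ^ 2 + ‖y - w‖ ^ 2) := by
      gcongr
    have h7 : α / 2 * ‖z - w‖ ^ 2 ≤ α / 2 * ((1 + s) * ‖x - y‖ ^ 2 + (1 + 1 / s) * (2 * (‖x - z‖ ^ 2 + ‖y - w‖ ^ 2))) := by
      gcongr; linarith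
    linarith
  have m6 := hnear z hz w hw
  have chain : u z0 + v w0 - α / 2 * ‖z0 - w0‖ ^ 2 - 3 * δ₁ / 4 ≤
      u z + v w - α / 2 * ‖z - w‖ ^ 2 - a / 8 * (‖x - z‖ ^ 2 + ‖y - w‖ ^ 2) := by
    linarith
  have hsq : ‖x - z‖ ^ 2 + ‖y - w‖ ^ 2 ≤ η ^ 2 := by
    have h1 : a / 8 * (‖x - z‖ ^ 2 + ‖y - w‖ ^ 2) ≤ δ₁ := by linarith
    have h2 : 1 * (‖x - z‖ ^ 2 + ‖y - w‖ ^ 2) ≤ a * (‖x - z‖ ^ 2 + ‖y - w‖ ^ 2) := by gcongr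
    linarith
  have hxz : ‖x - z‖ ≤ η := by
    apply abs_le_of_sq_le_sq' _ hη0.le |>.2
    nlinarith [sq_nonneg ‖y - w‖]
  have hyw : ‖y - w‖ ≤ η := by
    apply abs_le_of_sq_le_sq' _ hη0.le |>.2
    nlinarith [sq_nonneg ‖x - z‖]
  have hqq : ∀ p : E, ‖p‖ < r → ‖((1 + s) * α) • ((x - z) - (y - w)) + (s * α) • (z - w)‖ + ‖p‖ ≤ δ := by
    intro p hp
    have t1 := norm_add_le (((1 + s) * α) • ((x - z) - (y - w))) ((s * α) • (z - w))
    rw [norm_smul, norm_smul, Real.norm_eq_abs, Real.norm_eq_abs, abs_of_nonneg hα',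
      abs_of_nonneg (by positivity)] at t1
    have t2 := norm_sub_le (x - z) (y - w)
    have t3 : (1 + s) * α * ‖x - z - (y - w)‖ ≤ (1 + 1) * α * (η + η) := by
      gcongr; linarith
    have t4 : s * α * ‖z - w‖ ≤ s * α * (2 * ρ) := by gcongr; exact hdd z hz w hw
    linarith
  refine ⟨z, hz, w, hw, q₁ x, q₂ y, X, Y, ?_, ?_, ?_, hzt, hwt, ?_⟩
  · intro z' hz' w' hw'
    have := hnear z' hz' w' hw'
    have : 0 ≤ a / 8 * (‖x - z‖ ^ 2 + ‖y - w‖ ^ 2) := by positivity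
    linarith
  · have e : q₁ x - α • (z - w) = (((1 + s) * α) • ((x - z) - (y - w)) + (s * α) • (z - w)) + p₁ := by
      rw [hg₁]; module
    rw [e]
    exact (norm_add_le _ _).trans (hqq p₁ hp₁)
  · have e : q₂ y + α • (z - w) = -(((1 + s) * α) • ((x - z) - (y - w)) + (s * α) • (z - w)) + p₂ := by
      rw [hg₂]; module
    rw [e]
    refine (norm_add_le _ _).trans ?_
    rw [norm_neg]
    exact hqq p₂ hp₂
  · intro h k
    have t1 := hXY h k
    have t2 : ‖h - k‖ ^ 2 ≤ 2 * (‖h‖ ^ 2 + ‖k‖ ^ 2) := by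
      have h3 : 0 ≤ ‖h + k‖ ^ 2 := by positivity
      rw [aux_norm_add_sq] at h3
      rw [aux_norm_sub_sq]; linarith
    have t3 : s * α * ‖h - k‖ ^ 2 ≤ s * α * (2 * (‖h‖ ^ 2 + ‖k‖ ^ 2)) := by gcongr
    have t4 : 2 * s * α * (‖h‖ ^ 2 + ‖k‖ ^ 2) ≤ δ * (‖h‖ ^ 2 + ‖k‖ ^ 2) := by gcongr
    linarith

end Abstract4

section TestFn
variable {n d : ℕ}

/-- Quadratic test function. -/
def testFn (t0 : ℝ) (x0 : EucSp n) (p a : ℝ) (r : EucSp n) (H : EucSp n →L[ℝ] EucSp n) :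
    ℝ → EucSp n → ℝ :=
  fun t x => p * (t - t0) + a * (t - t0) ^ 2 + ⟪r, x - x0⟫ + 1 / 2 * ⟪H (x - x0), x - x0⟫

/-- Symmetrization of a continuous linear map. -/
def symH (H : EucSp n →L[ℝ] EucSp n) : EucSp n →L[ℝ] EucSp n :=
  (1 / 2 : ℝ) • (H + ContinuousLinearMap.adjoint H)

lemma symH_inner (H : EucSp n →L[ℝ] EucSp n) (x : EucSp n) : ⟪symH H x, x⟫ = ⟪H x, x⟫ := by
  simp only [symH, _root_.smul_apply, _root_.add_apply,
    inner_smul_left, inner_add_left, ContinuousLinearMap.adjoint_inner_left]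
  rw [real_inner_comm (H x) x]
  simp only [conj_trivial]
  ring

/-- Column of a matrix as a Euclidean vector. -/
def colv (S : Matrix (Fin n) (Fin d) ℝ) (j : Fin d) : EucSp n := WithLp.toLp 2 (fun i => S i j)

lemma trace_colv (S : Matrix (Fin n) (Fin d) ℝ) (G : EucSp n →L[ℝ] EucSp n)
    (Q : Matrix (Fin n) (Fin n) ℝ) (hQ : ∀ i j, Q i j = G (EuclideanSpace.single j 1) i) :
    (S * Sᵀ * Q).trace =
      ∑ j, ⟪G (colv S j), colv S j⟫ := by
  have hc : ∀ j, G (colv S j) = ∑ i, S i j • G (EuclideanSpace.single i 1) := by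
    intro j
    have : colv S j = ∑ i, S i j • (EuclideanSpace.single i (1 : ℝ) : EucSp n) := by
      ext k
      simp [colv, Finset.sum_apply, Pi.single_apply]
    rw [this, map_sum]
    simp
  have hi : ∀ j, ⟪G (colv S j), colv S j⟫ =
      ∑ k, ∑ i, S i j * S k j * G (EuclideanSpace.single i 1) k := by
    intro j
    rw [PiLp.inner_apply]
    refine Finset.sum_congr rfl fun k _ => ?_
    rw [hc j]
    simp [colv, Finset.mul_sum]
    refine Finset.sum_congr rfl fun i _ => ?_
    ring
  simp only [hi]
  simp only [Matrix.trace, Matrix.diag, Matrix.mul_apply, Matrix.transpose_apply, hQ]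
  simp only [Finset.sum_mul]
  rw [Finset.sum_comm]
  rw [Finset.sum_comm (s := (Finset.univ : Finset (Fin d)))]
  refine Finset.sum_congr rfl fun k _ => ?_
  rw [Finset.sum_comm]

variable (t0 : ℝ) (x0 : EucSp n) (p a : ℝ) (r : EucSp n) (H : EucSp n →L[ℝ] EucSp n)

lemma testFn_hasDerivAt (t : ℝ) (x : EucSp n) :
    HasDerivAt (fun s => testFn t0 x0 p a r H s x) (p + 2 * a * (t - t0)) t := by
  unfold testFn
  have h := ((((hasDerivAt_id t).sub_const t0).const_mul p).add
    ((((hasDerivAt_id t).sub_const t0).pow 2).const_mul a)).add_const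
      (⟪r, x - x0⟫ + 1 / 2 * ⟪H (x - x0), x - x0⟫)
  refine (h.congr_deriv (by simp; ring)).congr_of_eventuallyEq (Eventually.of_forall fun s => ?_)
  simp [add_assoc]

lemma testFn_tderiv (t : ℝ) (x : EucSp n) :
    tderiv (testFn t0 x0 p a r H) t x = p + 2 * a * (t - t0) :=
  (testFn_hasDerivAt t0 x0 p a r H t x).deriv

lemma testFn_hasGradientAt (t : ℝ) (x : EucSp n) :
    HasGradientAt (fun y => testFn t0 x0 p a r H t y) (r + symH H (x - x0)) x := by
  rw [hasGradientAt_iff_hasFDerivAt]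
  unfold testFn
  have h0 : HasFDerivAt (fun y : EucSp n => y - x0) (ContinuousLinearMap.id ℝ _) x :=
    (hasFDerivAt_id x).sub_const x0
  have h1 : HasFDerivAt (fun y : EucSp n => H (y - x0)) H x := by
    exact (H.hasFDerivAt (x := x - x0)).comp x h0
  have h2 := ((HasFDerivAt.inner ℝ (hasFDerivAt_const r x) h0).const_add
    (p * (t - t0) + a * (t - t0) ^ 2)).add ((h1.inner ℝ h0).const_mul (1 / 2))
  refine h2.congr_fderiv ?_
  ext v
  simp [symH, inner_add_left, inner_smul_left, ContinuousLinearMap.adjoint_inner_left,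
    fderivInnerCLM_apply]
  simp only [inner_sub_left, inner_sub_right, real_inner_comm (H v)]
  ring

lemma testFn_xgrad (t : ℝ) (x : EucSp n) :
    xgrad (testFn t0 x0 p a r H) t x = r + symH H (x - x0) :=
  (testFn_hasGradientAt t0 x0 p a r H t x).gradient

lemma testFn_hasFDerivAt_grad (t : ℝ) (x : EucSp n) :
    HasFDerivAt (fun y => xgrad (testFn t0 x0 p a r H) t y) (symH H) x := by
  have e : (fun y => xgrad (testFn t0 x0 p a r H) t y) = fun y => r + symH H (y - x0) := by
    funext y; exact testFn_xgrad t0 x0 p a r H t y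
  rw [e]
  have h0 : HasFDerivAt (fun y : EucSp n => y - x0) (ContinuousLinearMap.id ℝ _) x :=
    (hasFDerivAt_id x).sub_const x0
  exact (((symH H).hasFDerivAt (x := x - x0)).comp x h0).const_add r

lemma testFn_xhess (t : ℝ) (x : EucSp n) :
    xhess (testFn t0 x0 p a r H) t x = fun i j => symH H (EuclideanSpace.single j 1) i := by
  funext i j
  unfold xhess
  rw [(testFn_hasFDerivAt_grad t0 x0 p a r H t x).fderiv]

lemma testFn_isC12 (s : Set (ℝ × EucSp n)) : IsC12On (testFn t0 x0 p a r H) s where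
  cont := by unfold testFn; fun_prop
  diff_t := fun q _ => (testFn_hasDerivAt t0 x0 p a r H q.1 q.2).differentiableAt
  cont_t := by
    simp only [testFn_tderiv]; fun_prop
  diff_x := fun q _ => (testFn_hasGradientAt t0 x0 p a r H q.1 q.2).differentiableAt
  diff_grad := fun q _ => (testFn_hasFDerivAt_grad t0 x0 p a r H q.1 q.2).differentiableAt
  cont_grad := by
    simp only [testFn_xgrad]; fun_prop
  cont_hess := by
    simp only [testFn_xhess]; exact continuousOn_const

lemma testFn_Lop (b : ℝ → EucSp n → EucSp n) (σ : ℝ → EucSp n → Matrix (Fin n) (Fin d) ℝ) :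
    Lop b σ (testFn t0 x0 p a r H) t0 x0 =
      ⟪b t0 x0, r⟫ + 1 / 2 * ∑ j, ⟪H (colv (σ t0 x0) j), colv (σ t0 x0) j⟫ := by
  unfold Lop
  rw [testFn_xgrad, trace_colv _ (symH H) _ (fun i j => by rw [testFn_xhess])]
  simp [symH_inner]

lemma testFn_self : testFn t0 x0 p a r H t0 x0 = 0 := by simp [testFn]

end TestFn
section Touch
variable {n d : ℕ} (t0 : ℝ) (x0 : EucSp n)

lemma sub_touch {T : ℝ} {b : ℝ → EucSp n → EucSp n} {σ : ℝ → EucSp n → Matrix (Fin n) (Fin d) ℝ}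
    {f : ℝ → EucSp n → ℝ} {g : EucSp n → ℝ} {K : Set (EucSp n)}
    {c : ℝ → EucSp n → EucSp n → ℝ} {U : ℝ → EucSp n → ℝ} (hU : IsSubHJB1 T b σ f g K c U)
    (h0 : 0 ≤ t0) (hT : t0 < T) {p a : ℝ} {r : EucSp n} {H : EucSp n →L[ℝ] EucSp n}
    (h : ∀ᶠ q in 𝓝[pdom T n] (t0, x0), U q.1 q.2 ≤ U t0 x0 + testFn t0 x0 p a r H q.1 q.2) :
    U t0 x0 ≤ p + ⟪b t0 x0, r⟫ + 1 / 2 * ∑ j, ⟪H (colv (σ t0 x0) j), colv (σ t0 x0) j⟫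
      + Real.exp t0 * f t0 x0 ∨ U t0 x0 ≤ Mtop K c U t0 x0 := by
  have := hU.1 t0 x0 ⟨⟨h0, hT⟩, mem_univ _⟩ _ (testFn_isC12 t0 x0 p a r H _) (by
    show ∀ᶠ q in _, _
    filter_upwards [h] with q hq
    simp only [testFn_self]
    linarith)
  rw [testFn_Lop, testFn_tderiv, sub_self] at this
  rcases min_le_iff.1 this with h | h
  · left; linarith
  · right; linarith

lemma super_touch {T : ℝ} {b : ℝ → EucSp n → EucSp n} {σ : ℝ → EucSp n → Matrix (Fin n) (Fin d) ℝ}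
    {f : ℝ → EucSp n → ℝ} {g : EucSp n → ℝ} {K : Set (EucSp n)}
    {c : ℝ → EucSp n → EucSp n → ℝ} {V : ℝ → EucSp n → ℝ} (hV : IsSuperHJB1 T b σ f g K c V)
    (h0 : 0 ≤ t0) (hT : t0 < T) {p a : ℝ} {r : EucSp n} {H : EucSp n →L[ℝ] EucSp n}
    (h : ∀ᶠ q in 𝓝[pdom T n] (t0, x0), V t0 x0 + testFn t0 x0 p a r H q.1 q.2 ≤ V q.1 q.2) :
    p + ⟪b t0 x0, r⟫ + 1 / 2 * ∑ j, ⟪H (colv (σ t0 x0) j), colv (σ t0 x0) j⟫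
      + Real.exp t0 * f t0 x0 ≤ V t0 x0 ∧ Mtop K c V t0 x0 ≤ V t0 x0 := by
  have := hV.1 t0 x0 ⟨⟨h0, hT⟩, mem_univ _⟩ _ (testFn_isC12 t0 x0 p a r H _) (by
    show ∀ᶠ q in _, _
    filter_upwards [h] with q hq
    simp only [testFn_self]
    linarith)
  rw [testFn_Lop, testFn_tderiv, sub_self] at this
  have := le_min_iff.1 this
  exact ⟨by linarith [this.1], by linarith [this.2]⟩

end Touch

section ParabSums
variable {n : ℕ}

/-- Extended space. -/
abbrev ExtSp (n : ℕ) := WithLp 2 (ℝ × EucSp n)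

/-- Spatial block. -/
def xblock (X : ExtSp n →L[ℝ] ExtSp n) : EucSp n →L[ℝ] EucSp n :=
  (WithLp.sndL 2 ℝ ℝ (EucSp n)).comp (X.comp
    ((WithLp.prodContinuousLinearEquiv 2 ℝ ℝ (EucSp n)).symm.toContinuousLinearMap.comp
      (ContinuousLinearMap.inr ℝ ℝ (EucSp n))))

lemma xblock_inner (X : ExtSp n →L[ℝ] ExtSp n) (e : EucSp n) :
    ⟪xblock X e, e⟫ = ⟪X (WithLp.toLp 2 (0, e)), WithLp.toLp 2 ((0 : ℝ), e)⟫ := by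
  rw [WithLp.prod_inner_apply]
  simp [xblock]

lemma ext_quad_le (X : ExtSp n →L[ℝ] ExtSp n) {δ : ℝ} (hδ : 0 < δ) (τ : ℝ) (e : EucSp n) :
    ⟪X (WithLp.toLp 2 (τ, e)), WithLp.toLp 2 (τ, e)⟫ ≤
      (‖X‖ + ‖X‖ ^ 2 / δ) * τ ^ 2 + ⟪xblock X e, e⟫ + δ * ‖e‖ ^ 2 := by
  set z1 : ExtSp n := WithLp.toLp 2 (τ, 0) with hz1
  set z2 : ExtSp n := WithLp.toLp 2 (0, e) with hz2
  have e0 : (WithLp.toLp 2 (τ, e) : ExtSp n) = z1 + z2 := by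
    rw [hz1, hz2, ← WithLp.toLp_add]; simp
  have n1 : ‖z1‖ = |τ| := by rw [hz1, WithLp.norm_toLp_fst, Real.norm_eq_abs]
  have n2 : ‖z2‖ = ‖e‖ := by rw [hz2, WithLp.norm_toLp_snd]
  rw [e0, xblock_inner, ← hz2, map_add, inner_add_left, inner_add_right, inner_add_right]
  have b : ∀ z w : ExtSp n, ⟪X z, w⟫ ≤ ‖X‖ * ‖z‖ * ‖w‖ := fun z w =>
    (real_inner_le_norm _ _).trans (by gcongr; exact X.le_opNorm z)
  have b1 := b z1 z1
  have b2 := b z1 z2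
  have b3 := b z2 z1
  rw [n1] at b1 b2 b3
  rw [n2] at b2 b3
  have h2 : 2 * (‖X‖ * |τ|) * ‖e‖ ≤ δ * ‖e‖ ^ 2 + ‖X‖ ^ 2 / δ * τ ^ 2 := by
    have : δ * ‖e‖ ^ 2 + ‖X‖ ^ 2 / δ * τ ^ 2 - 2 * (‖X‖ * |τ|) * ‖e‖ =
      (δ * ‖e‖ - ‖X‖ * |τ|) ^ 2 / δ := by
      rw [← sq_abs τ]; field_simp; ring
    have h3 : 0 ≤ (δ * ‖e‖ - ‖X‖ * |τ|) ^ 2 / δ := by positivity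
    linarith
  have h3 : |τ| * |τ| = τ ^ 2 := by rw [← sq, sq_abs]
  have h4 : ‖X‖ * |τ| * |τ| = ‖X‖ * τ ^ 2 := by rw [mul_assoc, h3]
  nlinarith

/-- Scaled embedding. -/
def emb (A : ℝ) (q : ℝ × EucSp n) : ExtSp n := WithLp.toLp 2 (A * q.1, q.2)

lemma emb_cont (A : ℝ) : Continuous (emb A : ℝ × EucSp n → ExtSp n) :=
  (WithLp.prod_continuous_toLp 2 ℝ (EucSp n)).comp (by fun_prop)

lemma emb_sub (A : ℝ) (q q' : ℝ × EucSp n) :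
    emb A q - emb A q' = WithLp.toLp 2 (A * (q.1 - q'.1), q.2 - q'.2) := by
  unfold emb
  rw [← WithLp.toLp_sub]; simp [mul_sub]

lemma emb_sub_norm (A : ℝ) (q q' : ℝ × EucSp n) :
    ‖emb A q - emb A q'‖ ^ 2 = A ^ 2 * (q.1 - q'.1) ^ 2 + ‖q.2 - q'.2‖ ^ 2 := by
  rw [emb_sub, WithLp.prod_norm_sq_eq_of_L2]
  simp [mul_pow]

lemma touch_of_ext {D : Set (ℝ × EucSp n)} {A δ a : ℝ} (hδ : 0 < δ)
    {u : ℝ → EucSp n → ℝ} {W : ExtSp n → ℝ}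
    (hW : ∀ q, W (emb A q) = u q.1 q.2) {q : ℝ × EucSp n} {g : ExtSp n}
    {X : ExtSp n →L[ℝ] ExtSp n}
    (h : ∀ᶠ k in 𝓝 (0 : ExtSp n), emb A q + k ∈ emb A '' D →
      W (emb A q + k) ≤ W (emb A q) + ⟪g, k⟫ + 1 / 2 * ⟪X k, k⟫ + δ * ‖k‖ ^ 2)
    (ha : A ^ 2 * (1 / 2 * (‖X‖ + ‖X‖ ^ 2 / δ) + δ) ≤ a) :
    ∀ᶠ q' in 𝓝[D] q, u q'.1 q'.2 ≤ u q.1 q.2 + testFn q.1 q.2 (A * g.fst) a g.snd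
      (xblock X + (4 * δ) • ContinuousLinearMap.id ℝ _) q'.1 q'.2 := by
  have ht : Tendsto (fun q' => emb A q' - emb A q) (𝓝 q) (𝓝 (0 : ExtSp n)) := by
    have : Continuous (fun q' => emb A q' - emb A q : ℝ × EucSp n → ExtSp n) :=
      (emb_cont A).sub continuous_const
    simpa using this.tendsto q
  have h1 := (ht.eventually h).filter_mono (nhdsWithin_le_nhds (s := D))
  filter_upwards [h1, self_mem_nhdsWithin] with q' hq' hD
  rw [add_sub_cancel] at hq'
  have h2 := hq' ⟨q', hD, rfl⟩
  rw [hW, hW, emb_sub_norm, emb_sub] at h2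
  have h3 := ext_quad_le X hδ (A * (q'.1 - q.1)) (q'.2 - q.2)
  have h4 : ⟪g, (WithLp.toLp 2 (A * (q'.1 - q.1), q'.2 - q.2) : ExtSp n)⟫ =
      A * g.fst * (q'.1 - q.1) + ⟪g.snd, q'.2 - q.2⟫ := by
    rw [WithLp.prod_inner_apply]
    simp; ring
  rw [h4] at h2
  refine h2.trans ?_
  unfold testFn
  have h5 := mul_le_mul_of_nonneg_right ha (sq_nonneg (q'.1 - q.1))
  have h6 : ⟪(xblock X + (4 * δ) • ContinuousLinearMap.id ℝ (EucSp n)) (q'.2 - q.2), q'.2 - q.2⟫ =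
      ⟪xblock X (q'.2 - q.2), q'.2 - q.2⟫ + 4 * δ * ‖q'.2 - q.2‖ ^ 2 := by
    rw [_root_.add_apply, inner_add_left, _root_.smul_apply, inner_smul_left]
    simp [real_inner_self_eq_norm_sq]
  rw [h6]
  have h7 : 0 ≤ δ * ‖q'.2 - q.2‖ ^ 2 := by positivity
  rw [mul_pow] at h3
  linarith

theorem parab_sums {D : Set (ℝ × EucSp n)} (hD : IsCompact D) (hne : D.Nonempty)
    {u v : ℝ → EucSp n → ℝ}
    (hu : UpperSemicontinuousOn (fun q : ℝ × EucSp n => u q.1 q.2) D)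
    (hv : UpperSemicontinuousOn (fun q : ℝ × EucSp n => v q.1 q.2) D)
    {α δ A : ℝ} (hα : 0 < α) (hδ : 0 < δ) (hA : 0 < A) :
    ∃ q ∈ D, ∃ w ∈ D, ∃ (p₁ p₂ a : ℝ) (r₁ r₂ : EucSp n) (X Y : EucSp n →L[ℝ] EucSp n),
      (∀ q' ∈ D, ∀ w' ∈ D,
        u q'.1 q'.2 + v w'.1 w'.2 - α / 2 * (A ^ 2 * (q'.1 - w'.1) ^ 2 + ‖q'.2 - w'.2‖ ^ 2) ≤
        u q.1 q.2 + v w.1 w.2 - α / 2 * (A ^ 2 * (q.1 - w.1) ^ 2 + ‖q.2 - w.2‖ ^ 2) + δ) ∧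
      |p₁ + p₂| ≤ δ ∧ ‖r₁ - α • (q.2 - w.2)‖ ≤ δ ∧ ‖r₂ + α • (q.2 - w.2)‖ ≤ δ ∧
      (∀ᶠ q' in 𝓝[D] q, u q'.1 q'.2 ≤ u q.1 q.2 + testFn q.1 q.2 p₁ a r₁ X q'.1 q'.2) ∧
      (∀ᶠ q' in 𝓝[D] w, v q'.1 q'.2 ≤ v w.1 w.2 + testFn w.1 w.2 p₂ a r₂ Y q'.1 q'.2) ∧
      (∀ h k, ⟪X h, h⟫ + ⟪Y k, k⟫ ≤ α * ‖h - k‖ ^ 2 + δ * (‖h‖ ^ 2 + ‖k‖ ^ 2)) := by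
  set δ' := min (δ / 5) (δ / (2 * A)) with hδ'
  have hδ'0 : 0 < δ' := by positivity
  have hδ'1 : 5 * δ' ≤ δ := by have : δ' ≤ δ / 5 := min_le_left _ _; linarith
  have hδ'2 : A * (2 * δ') ≤ δ := by
    have : δ' ≤ δ / (2 * A) := min_le_right _ _
    rw [le_div_iff₀ (by positivity)] at this; linarith
  clear_value δ'
  have hproj : Continuous (fun z : ExtSp n => ((z.fst / A, z.snd) : ℝ × EucSp n)) :=
    ((WithLp.continuous_fst 2 ℝ (EucSp n)).div_const A).prodMk (WithLp.continuous_snd 2 ℝ (EucSp n))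
  have hproj_emb : ∀ q : ℝ × EucSp n, (((emb A q).fst / A, (emb A q).snd) : ℝ × EucSp n) = q := by
    intro q; ext1
    · simp [emb]; field_simp
    · simp [emb]
  have husc : ∀ u : ℝ → EucSp n → ℝ, UpperSemicontinuousOn (fun q : ℝ × EucSp n => u q.1 q.2) D →
      UpperSemicontinuousOn (fun z : ExtSp n => u (z.fst / A) z.snd) (emb A '' D) := by
    intro u hu
    have hm : MapsTo (fun z : ExtSp n => ((z.fst / A, z.snd) : ℝ × EucSp n)) (emb A '' D) D := by
      rintro _ ⟨q, hq, rfl⟩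
      simpa only [hproj_emb] using hq
    exact hu.comp hproj.continuousOn hm
  have hWe : ∀ u : ℝ → EucSp n → ℝ, ∀ q : ℝ × EucSp n,
      (fun z : ExtSp n => u (z.fst / A) z.snd) (emb A q) = u q.1 q.2 := by
    intro u q
    have h1 := congrArg Prod.fst (hproj_emb q)
    have h2 := congrArg Prod.snd (hproj_emb q)
    simp only at h1 h2
    simp only [h1, h2]
  obtain ⟨_, ⟨q, hq, rfl⟩, _, ⟨w, hw, rfl⟩, g₁, g₂, X, Y, h1, h2, h3, h4, h5, h6⟩ :=
    sums_thm (hD.image (emb_cont A)) (hne.image _) (husc u hu) (husc v hv) hα hδ'0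
  have hfst : ∀ z : ExtSp n, |z.fst| ≤ ‖z‖ := fun z => by
    have := WithLp.prod_norm_sq_eq_of_L2 z
    rw [← Real.norm_eq_abs]
    apply abs_le_of_sq_le_sq' _ (norm_nonneg _) |>.2
    nlinarith [sq_nonneg ‖z.snd‖]
  have hsnd : ∀ z : ExtSp n, ‖z.snd‖ ≤ ‖z‖ := fun z => by
    have := WithLp.prod_norm_sq_eq_of_L2 z
    apply abs_le_of_sq_le_sq' _ (norm_nonneg _) |>.2
    nlinarith [sq_nonneg ‖z.fst‖]
  set a := A ^ 2 * (1 / 2 * (‖X‖ + ‖X‖ ^ 2 / δ') + δ') +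
    A ^ 2 * (1 / 2 * (‖Y‖ + ‖Y‖ ^ 2 / δ') + δ') with ha
  have hXa : 0 ≤ A ^ 2 * (1 / 2 * (‖X‖ + ‖X‖ ^ 2 / δ') + δ') := by positivity
  have hYa : 0 ≤ A ^ 2 * (1 / 2 * (‖Y‖ + ‖Y‖ ^ 2 / δ') + δ') := by positivity
  refine ⟨q, hq, w, hw, A * g₁.fst, A * g₂.fst, a, g₁.snd, g₂.snd,
    xblock X + (4 * δ') • ContinuousLinearMap.id ℝ _, xblock Y + (4 * δ') • ContinuousLinearMap.id ℝ _,
    ?_, ?_, ?_, ?_, touch_of_ext (W := fun z : ExtSp n => u (z.fst / A) z.snd) hδ'0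
      (hWe u) h4 (by linarith),
    touch_of_ext (W := fun z : ExtSp n => v (z.fst / A) z.snd) hδ'0
      (hWe v) h5 (by linarith), ?_⟩
  · intro q' hq' w' hw'
    have := h1 _ (mem_image_of_mem _ hq') _ (mem_image_of_mem _ hw')
    rw [emb_sub_norm, emb_sub_norm] at this
    have e1 := hWe u q
    have e2 := hWe u q'
    have e3 := hWe v w
    have e4 := hWe v w'
    simp only at e1 e2 e3 e4
    rw [e1, e2, e3, e4] at this
    linarith
  · have e : g₁ + g₂ = (g₁ - α • (emb A q - emb A w)) + (g₂ + α • (emb A q - emb A w)) := by abel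
    have t1 : ‖g₁ + g₂‖ ≤ 2 * δ' := by
      rw [e]; exact (norm_add_le _ _).trans (by linarith)
    have t2 := (hfst (g₁ + g₂)).trans t1
    rw [← mul_add, abs_mul, abs_of_pos hA]
    calc A * |g₁.fst + g₂.fst| ≤ A * (2 * δ') := by
          gcongr; simpa using t2
      _ ≤ δ := hδ'2
  · have := (hsnd _).trans h2
    rw [emb_sub] at this
    simp at this
    linarith
  · have := (hsnd _).trans h3
    rw [emb_sub] at this
    simp at this
    linarith
  · intro h k
    have t := h6 (WithLp.toLp 2 (0, h)) (WithLp.toLp 2 (0, k))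
    rw [← xblock_inner, ← xblock_inner, ← WithLp.toLp_sub, Prod.mk_sub_mk, sub_zero,
      WithLp.norm_toLp_snd, WithLp.norm_toLp_snd, WithLp.norm_toLp_snd] at t
    have h6 : ∀ (Z : EucSp n →L[ℝ] EucSp n) (e : EucSp n),
      ⟪(Z + (4 * δ') • ContinuousLinearMap.id ℝ (EucSp n)) e, e⟫ = ⟪Z e, e⟫ + 4 * δ' * ‖e‖ ^ 2 := by
      intro Z e
      rw [_root_.add_apply, inner_add_left, _root_.smul_apply, inner_smul_left]
      simp [real_inner_self_eq_norm_sq]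
    rw [h6, h6]
    have : 5 * δ' * (‖h‖ ^ 2 + ‖k‖ ^ 2) ≤ δ * (‖h‖ ^ 2 + ‖k‖ ^ 2) := by gcongr
    linarith

end ParabSums

section Penal
variable {n d : ℕ}

/-- Doubling penalty. -/
def pen (A : ℝ) (q w : ℝ × EucSp n) : ℝ := A ^ 2 * (q.1 - w.1) ^ 2 + ‖q.2 - w.2‖ ^ 2

lemma pen_nonneg (A : ℝ) (q w : ℝ × EucSp n) : 0 ≤ pen A q w := by unfold pen; positivity

lemma pen_self (A : ℝ) (q : ℝ × EucSp n) : pen A q q = 0 := by simp [pen]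

lemma pen_mono {A A' : ℝ} (hA : 0 ≤ A) (h : A ≤ A') (q w : ℝ × EucSp n) :
    pen A q w ≤ pen A' q w := by unfold pen; gcongr

lemma penal_choice {D : Set (ℝ × EucSp n)} {q0 : ℝ × EucSp n} (hq0 : q0 ∈ D)
    (G : ℝ × EucSp n → ℝ × EucSp n → ℝ) {B : ℝ} (hG : ∀ q ∈ D, ∀ w ∈ D, G q w ≤ B)
    {τ α0 : ℝ} (hτ : 0 < τ) (hα0 : 0 < α0) :
    ∃ α ≥ α0, ∃ A0 ≥ (1 : ℝ), ∀ A ≥ A0, ∀ δ : ℝ, ∀ q ∈ D, ∀ w ∈ D,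
      (∀ q' ∈ D, ∀ w' ∈ D, G q' w' - α / 2 * pen A q' w' ≤ G q w - α / 2 * pen A q w + δ) →
      α / 4 * pen A q w ≤ τ + δ := by
  set S : ℝ → ℝ → Set ℝ := fun α A =>
    (fun z : (ℝ × EucSp n) × (ℝ × EucSp n) => G z.1 z.2 - α / 2 * pen A z.1 z.2) '' (D ×ˢ D) with hS
  set M : ℝ → ℝ → ℝ := fun α A => sSup (S α A) with hM
  have hSb : ∀ α A, 0 ≤ α → BddAbove (S α A) := by
    intro α A hα
    refine ⟨B, ?_⟩
    rintro _ ⟨z, hz, rfl⟩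
    have := hG z.1 hz.1 z.2 hz.2
    have := pen_nonneg A z.1 z.2
    have : 0 ≤ α / 2 * pen A z.1 z.2 := by positivity
    simp only; linarith
  have hSne : ∀ α A, (S α A).Nonempty := fun α A => ⟨_, ⟨(q0, q0), ⟨hq0, hq0⟩, rfl⟩⟩
  have hle : ∀ α A, 0 ≤ α → ∀ q ∈ D, ∀ w ∈ D, G q w - α / 2 * pen A q w ≤ M α A := by
    intro α A hα q hq w hw
    exact le_csSup (hSb α A hα) ⟨(q, w), ⟨hq, hw⟩, rfl⟩
  have hMle : ∀ α A c, (∀ q ∈ D, ∀ w ∈ D, G q w - α / 2 * pen A q w ≤ c) → M α A ≤ c := by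
    intro α A c h
    refine csSup_le (hSne α A) ?_
    rintro _ ⟨z, hz, rfl⟩
    exact h z.1 hz.1 z.2 hz.2
  have hG0 : ∀ α A, 0 ≤ α → G q0 q0 ≤ M α A := by
    intro α A hα
    simpa [pen_self] using hle α A hα q0 hq0 q0 hq0
  have hMA : ∀ α A A', 0 ≤ α → 1 ≤ A → A ≤ A' → M α A' ≤ M α A := by
    intro α A A' hα hA hAA'
    refine hMle _ _ _ fun q hq w hw => (le_trans ?_ (hle α A hα q hq w hw))
    have := pen_mono (by linarith) hAA' q w
    gcongr
  set N : ℝ → ℝ := fun α => sInf (M α '' Ici 1) with hN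
  have hNb : ∀ α, 0 ≤ α → BddBelow (M α '' Ici 1) := by
    intro α hα
    refine ⟨G q0 q0, ?_⟩
    rintro _ ⟨A, _, rfl⟩
    exact hG0 α A hα
  have hNne : ∀ α, (M α '' Ici 1).Nonempty := fun α => ⟨_, ⟨1, by simp, rfl⟩⟩
  have hN0 : ∀ α, 0 ≤ α → G q0 q0 ≤ N α := by
    intro α hα
    refine le_csInf (hNne α) ?_
    rintro _ ⟨A, _, rfl⟩
    exact hG0 α A hα
  obtain ⟨j, hj⟩ : ∃ j : ℕ, N (2 ^ j * α0) - N (2 ^ (j + 1) * α0) ≤ τ / 2 := by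
    by_contra hcon
    push Not at hcon
    have hind : ∀ j : ℕ, N (2 ^ j * α0) ≤ N α0 - j * (τ / 2) := by
      intro j
      induction j with
      | zero => simp
      | succ j ih => have := hcon j; push_cast; linarith
    obtain ⟨j, hj⟩ := exists_nat_gt ((N α0 - G q0 q0) / (τ / 2))
    rw [div_lt_iff₀ (by positivity)] at hj
    have := hind j
    have := hN0 (2 ^ j * α0) (by positivity)
    linarith
  set α := 2 ^ (j + 1) * α0 with hα
  have hα2 : 2 ^ j * α0 = α / 2 := by rw [hα, pow_succ]; ring
  rw [hα2] at hj
  have hα1 : α0 ≤ α := by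
    have : (1 : ℝ) ≤ 2 ^ (j + 1) := one_le_pow₀ (by norm_num)
    rw [hα]; nlinarith
  have hαp : 0 < α := by linarith
  obtain ⟨_, ⟨A0, hA0, rfl⟩, hlt⟩ := exists_lt_of_csInf_lt (hNne (α / 2))
    (show sInf (M (α / 2) '' Ici 1) < N (α / 2) + τ / 2 by
      show N (α / 2) < _
      linarith)
  refine ⟨α, hα1, A0, hA0, fun A hA δ q hq w hw h => ?_⟩
  have hA1 : (1 : ℝ) ≤ A := le_trans hA0 hA
  have h1 : M α A ≤ G q w - α / 2 * pen A q w + δ := hMle _ _ _ h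
  have h2 := hle (α / 2) A (by positivity) q hq w hw
  have h3 := hMA (α / 2) A0 A (by positivity) hA0 hA
  have h4 : N α ≤ M α A := csInf_le (hNb α hαp.le) ⟨A, hA1, rfl⟩
  linarith

lemma terminal_gap {D : Set (ℝ × EucSp n)} (hD : IsCompact D) {T m : ℝ}
    {P Q : ℝ × EucSp n → ℝ}
    (hP : UpperSemicontinuousOn P D) (hQ : UpperSemicontinuousOn Q D)
    (hT : ∀ q ∈ D, q.1 = T → P q + Q q < m) :
    ∃ ρ > 0, ∀ q ∈ D, ∀ w ∈ D, (q.1 = T ∨ w.1 = T) → dist q w < ρ → P q + Q w < m := by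
  set F : Set ((ℝ × EucSp n) × (ℝ × EucSp n)) :=
    ((D ×ˢ D) ∩ (fun z => P z.1 + Q z.2) ⁻¹' Ici m) ∩ {z | z.1.1 = T ∨ z.2.1 = T} with hF
  have husc : UpperSemicontinuousOn (fun z : (ℝ × EucSp n) × (ℝ × EucSp n) => P z.1 + Q z.2)
      (D ×ˢ D) := by
    refine UpperSemicontinuousOn.add ?_ ?_
    · exact hP.comp continuous_fst.continuousOn (fun z hz => hz.1)
    · exact hQ.comp continuous_snd.continuousOn (fun z hz => hz.2)
  have hFc : IsCompact F := by
    refine (husc.isCompact_inter_preimage_Ici (hD.prod hD) m).inter_right ?_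
    refine IsClosed.union (isClosed_eq ?_ continuous_const) (isClosed_eq ?_ continuous_const) <;> fun_prop
  rcases F.eq_empty_or_nonempty with he | hne
  · refine ⟨1, one_pos, fun q hq w hw h _ => ?_⟩
    by_contra hcon
    have : ((q, w) : (ℝ × EucSp n) × (ℝ × EucSp n)) ∈ F := ⟨⟨⟨hq, hw⟩, by simpa using hcon⟩, h⟩
    rw [he] at this
    exact this
  · obtain ⟨z, hz, hmin⟩ := hFc.exists_isMinOn hne
      (f := fun z : (ℝ × EucSp n) × (ℝ × EucSp n) => dist z.1 z.2) (by fun_prop)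
    refine ⟨dist z.1 z.2, ?_, fun q hq w hw h hd => ?_⟩
    · rw [gt_iff_lt, dist_pos]
      intro heq
      obtain ⟨⟨⟨h1, h2⟩, h3⟩, h4⟩ := hz
      have h4' : z.1.1 = T := by
        rcases h4 with h4 | h4
        · exact h4
        · rw [heq]; exact h4
      have := hT z.1 h1 h4'
      have h3' : m ≤ P z.1 + Q z.2 := h3
      rw [← heq] at h3'
      linarith
    · by_contra hcon
      have : ((q, w) : (ℝ × EucSp n) × (ℝ × EucSp n)) ∈ F := ⟨⟨⟨hq, hw⟩, by simpa using hcon⟩, h⟩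
      have := hmin this
      simp only [Set.mem_ofPred_eq] at this
      linarith

lemma normsq_expand (x x0 : EucSp n) :
    ‖x‖ ^ 2 = ‖x0‖ ^ 2 + 2 * ⟪x0, x - x0⟫ + ‖x - x0‖ ^ 2 := by
  have h := aux_norm_add_sq x0 (x - x0)
  rw [add_sub_cancel] at h
  exact h

lemma testFn_add_quad (t0 : ℝ) (x0 : EucSp n) (p a β : ℝ) (r : EucSp n)
    (X : EucSp n →L[ℝ] EucSp n) (t : ℝ) (x : EucSp n) :
    testFn t0 x0 p a (r + (2 * β) • x0) (X + (2 * β) • ContinuousLinearMap.id ℝ _) t x =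
      testFn t0 x0 p a r X t x + β * (‖x‖ ^ 2 - ‖x0‖ ^ 2) := by
  rw [normsq_expand x x0]
  unfold testFn
  rw [_root_.add_apply, inner_add_left, inner_add_left, _root_.smul_apply, inner_smul_left,
    inner_smul_left]
  simp only [conj_trivial, ContinuousLinearMap.coe_id', id_eq, real_inner_self_eq_norm_sq]
  ring

lemma testFn_smul (c t0 : ℝ) (x0 : EucSp n) (p a : ℝ) (r : EucSp n)
    (X : EucSp n →L[ℝ] EucSp n) (t : ℝ) (x : EucSp n) :
    testFn t0 x0 (c * p) (c * a) (c • r) (c • X) t x = c * testFn t0 x0 p a r X t x := by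
  unfold testFn
  rw [_root_.smul_apply, inner_smul_left, inner_smul_left]
  simp only [conj_trivial]
  ring

end Penal

section Steps
variable {n d : ℕ}

lemma nhds_pdom_le {T R : ℝ} {q : ℝ × EucSp n} (hq : ‖q.2‖ < R) :
    𝓝[pdom T n] q ≤ 𝓝[Icc 0 T ×ˢ Metric.closedBall 0 R] q := by
  refine nhdsWithin_le_iff.2 ?_
  have h1 : ∀ᶠ q' : ℝ × EucSp n in 𝓝 q, ‖q'.2‖ < R :=
    (continuous_norm.comp continuous_snd).continuousAt.eventually_lt continuousAt_const hq
  filter_upwards [h1.filter_mono nhdsWithin_le_nhds, self_mem_nhdsWithin] with q' h2 h3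
  refine ⟨Ico_subset_Icc_self h3.1, ?_⟩
  rw [mem_closedBall_zero_iff]; exact h2.le

variable {T : ℝ} {b : ℝ → EucSp n → EucSp n} {σ : ℝ → EucSp n → Matrix (Fin n) (Fin d) ℝ}
    {f : ℝ → EucSp n → ℝ} {g : EucSp n → ℝ} {K : Set (EucSp n)}
    {c : ℝ → EucSp n → EucSp n → ℝ}

lemma quad_id (X : EucSp n →L[ℝ] EucSp n) (β : ℝ) (e : EucSp n) :
    ⟪(X + (2 * β) • ContinuousLinearMap.id ℝ (EucSp n)) e, e⟫ = ⟪X e, e⟫ + 2 * β * ‖e‖ ^ 2 := by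
  rw [_root_.add_apply, inner_add_left, _root_.smul_apply, inner_smul_left]
  simp

lemma sub_step {U : ℝ → EucSp n → ℝ} (hU : IsSubHJB1 T b σ f g K c U) {R β : ℝ}
    {t : ℝ} {x : EucSp n} (h0 : 0 ≤ t) (hT : t < T) (hx : ‖x‖ < R)
    {p a : ℝ} {r : EucSp n} {X : EucSp n →L[ℝ] EucSp n}
    (h : ∀ᶠ q' in 𝓝[Icc 0 T ×ˢ Metric.closedBall 0 R] (t, x),
      U q'.1 q'.2 - β * ‖q'.2‖ ^ 2 ≤ U t x - β * ‖x‖ ^ 2 + testFn t x p a r X q'.1 q'.2) :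
    U t x ≤ p + ⟪b t x, r + (2 * β) • x⟫ + 1 / 2 * ∑ j, (⟪X (colv (σ t x) j), colv (σ t x) j⟫
      + 2 * β * ‖colv (σ t x) j‖ ^ 2) + Real.exp t * f t x ∨ U t x ≤ Mtop K c U t x := by
  have := sub_touch t x hU h0 hT (p := p) (a := a) (r := r + (2 * β) • x)
    (H := X + (2 * β) • ContinuousLinearMap.id ℝ _) (by
      filter_upwards [h.filter_mono (nhds_pdom_le (T := T) (q := (t, x)) hx)] with q' hq'
      rw [testFn_add_quad]
      linarith)
  simpa only [quad_id] using this

lemma super_step {V : ℝ → EucSp n → ℝ} (hV : IsSuperHJB1 T b σ f g K c V) {R β l C k : ℝ}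
    (hl0 : 0 < l) (hl1 : l < 1) (hk : 0 < k) (hck : ∀ t x, ∀ ξ ∈ K, k ≤ c t x ξ)
    (hVb : ∀ t x, |V t x| ≤ C)
    {t : ℝ} {x : EucSp n} (h0 : 0 ≤ t) (hT : t < T) (hx : ‖x‖ < R)
    (hfC : Real.exp t * f t x ≤ C)
    {p a : ℝ} {r : EucSp n} {X : EucSp n →L[ℝ] EucSp n}
    (h : ∀ᶠ q' in 𝓝[Icc 0 T ×ˢ Metric.closedBall 0 R] (t, x),
      -((1 - l) * V q'.1 q'.2 + l * C) - β * ‖q'.2‖ ^ 2 ≤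
        -((1 - l) * V t x + l * C) - β * ‖x‖ ^ 2 + testFn t x p a r X q'.1 q'.2) :
    -p - ⟪b t x, r + (2 * β) • x⟫ - 1 / 2 * ∑ j, (⟪X (colv (σ t x) j), colv (σ t x) j⟫
      + 2 * β * ‖colv (σ t x) j‖ ^ 2) + Real.exp t * f t x ≤ (1 - l) * V t x + l * C ∧
    ∀ ξ ∈ K, (1 - l) * V t (x + ξ) + l * C - Real.exp t * c t x ξ + l * k ≤
      (1 - l) * V t x + l * C := by
  have hl : 0 < 1 - l := by linarith
  set γ := -(1 - l)⁻¹ with hγ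
  have hγ' : (1 - l) * γ = -1 := by rw [hγ]; field_simp
  obtain ⟨h1, h2⟩ := super_touch t x hV h0 hT (p := γ * p) (a := γ * a)
    (r := γ • (r + (2 * β) • x))
    (H := γ • (X + (2 * β) • ContinuousLinearMap.id ℝ _)) (by
      filter_upwards [h.filter_mono (nhds_pdom_le (T := T) (q := (t, x)) hx)] with q' hq'
      rw [testFn_smul, testFn_add_quad]
      refine le_of_mul_le_mul_left ?_ hl
      rw [mul_add, ← mul_assoc, hγ']
      linarith)
  constructor
  · have h3 := mul_le_mul_of_nonneg_left h1 hl.le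
    have e1 : ∀ e : EucSp n, ⟪(γ • (X + (2 * β) • ContinuousLinearMap.id ℝ (EucSp n))) e, e⟫ =
        γ * (⟪X e, e⟫ + 2 * β * ‖e‖ ^ 2) := by
      intro e
      rw [_root_.smul_apply, inner_smul_left, quad_id]; simp
    simp only [e1] at h3
    rw [← Finset.mul_sum, inner_smul_right] at h3
    have e2 : ∀ P Q S : ℝ, (1 - l) * (γ * p + γ * P + 1 / 2 * (γ * Q) + S) =
        -p - P - 1 / 2 * Q + (1 - l) * S := by
      intro P Q S
      linear_combination (p + P + 1 / 2 * Q) * hγ'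
    rw [e2] at h3
    have := mul_le_mul_of_nonneg_left hfC hl0.le
    linarith
  · intro ξ hξ
    have hb : BddAbove ((fun ξ => V t (x + ξ) - Real.exp t * c t x ξ) '' K) := by
      refine ⟨C, ?_⟩
      rintro _ ⟨ζ, hζ, rfl⟩
      have h3 := (abs_le.1 (hVb t (x + ζ))).2
      have h4 : 0 ≤ Real.exp t * c t x ζ :=
        mul_nonneg (Real.exp_pos _).le (hk.le.trans (hck t x ζ hζ))
      simp only
      linarith
    have h3 : V t (x + ξ) - Real.exp t * c t x ξ ≤ V t x :=
      (le_csSup hb ⟨ξ, hξ, rfl⟩).trans h2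
    have h4 := mul_le_mul_of_nonneg_left h3 hl.le
    have h5 : k ≤ Real.exp t * c t x ξ := by
      have := hck t x ξ hξ
      have := Real.one_le_exp h0
      nlinarith
    have h6 := mul_le_mul_of_nonneg_left h5 hl0.le
    linarith

lemma mtop_approx {U : ℝ → EucSp n → ℝ} (hK : K.Nonempty) {t : ℝ} {x : EucSp n}
    (h : U t x ≤ Mtop K c U t x) {η : ℝ} (hη : 0 < η) :
    ∃ ξ ∈ K, U t x ≤ U t (x + ξ) - Real.exp t * c t x ξ + η := by
  obtain ⟨_, ⟨ξ, hξ, rfl⟩, hlt⟩ := exists_lt_of_lt_csSup (hK.image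
    (fun ξ => U t (x + ξ) - Real.exp t * c t x ξ))
    (show Mtop K c U t x - η < sSup _ by unfold Mtop; linarith)
  exact ⟨ξ, hξ, by simp only at hlt; linarith⟩

/-- Combination of the local inequalities. -/
lemma local_combine {α δ β Cb Cs p₁ p₂ u w F₁ F₂ L ω : ℝ} (hα : 0 < α) (hδ : 0 < δ)
    (hβ : 0 < β)
    {x y r₁ r₂ b₁ b₂ : EucSp n} {X Y : EucSp n →L[ℝ] EucSp n} {S₁ S₂ : Fin d → EucSp n}
    (hp : |p₁ + p₂| ≤ δ) (hr₁ : ‖r₁ - α • (x - y)‖ ≤ δ) (hr₂ : ‖r₂ + α • (x - y)‖ ≤ δ)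
    (hXY : ∀ h k, ⟪X h, h⟫ + ⟪Y k, k⟫ ≤ α * ‖h - k‖ ^ 2 + δ * (‖h‖ ^ 2 + ‖k‖ ^ 2))
    (h1 : u ≤ p₁ + ⟪b₁, r₁ + (2 * β) • x⟫ + 1 / 2 * ∑ j, (⟪X (S₁ j), S₁ j⟫
      + 2 * β * ‖S₁ j‖ ^ 2) + F₁)
    (h2 : -p₂ - ⟪b₂, r₂ + (2 * β) • y⟫ - 1 / 2 * ∑ j, (⟪Y (S₂ j), S₂ j⟫
      + 2 * β * ‖S₂ j‖ ^ 2) + F₂ ≤ w)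
    (hb₁ : ‖b₁‖ ≤ Cb) (hb₂ : ‖b₂‖ ≤ Cb) (hS₁ : ∑ j, ‖S₁ j‖ ^ 2 ≤ Cs) (hS₂ : ∑ j, ‖S₂ j‖ ^ 2 ≤ Cs)
    (hbL : ‖b₁ - b₂‖ ≤ L * ‖x - y‖ + ω)
    (hSL : ∑ j, ‖S₁ j - S₂ j‖ ^ 2 ≤ (L * ‖x - y‖ + ω) ^ 2) :
    u - w ≤ δ * (1 + 2 * Cb + Cs) + 2 * Cb * (β * ‖x‖ + β * ‖y‖) + 2 * β * Cs +
      (L + L ^ 2) * (α * ‖x - y‖ ^ 2) + α * ω * ‖x - y‖ + α * ω ^ 2 + (F₁ - F₂) := by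
  have i1 : ∀ b r : EucSp n, ‖b‖ ≤ Cb → ∀ e : ℝ, ‖r‖ ≤ e → ⟪b, r⟫ ≤ Cb * e := by
    intro b r hb e hr
    refine (real_inner_le_norm b r).trans ?_
    have := norm_nonneg b
    gcongr
    linarith
  have j1 := i1 b₁ _ hb₁ δ hr₁
  have j2 := i1 b₂ _ hb₂ δ hr₂
  have j3 := i1 b₁ x hb₁ _ le_rfl
  have j4 := i1 b₂ y hb₂ _ le_rfl
  have j5 : ⟪b₁ - b₂, x - y⟫ ≤ (L * ‖x - y‖ + ω) * ‖x - y‖ :=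
    (real_inner_le_norm _ _).trans (by gcongr)
  rw [inner_sub_right, inner_smul_right] at j1
  rw [inner_add_right, inner_smul_right] at j2
  rw [inner_sub_left] at j5
  rw [inner_add_right, inner_smul_right] at h1 h2
  have j6 := mul_le_mul_of_nonneg_left j5 hα.le
  have j3' := mul_le_mul_of_nonneg_left j3 hβ.le
  have j4' := mul_le_mul_of_nonneg_left j4 hβ.le
  have s1 : ∑ j, (⟪X (S₁ j), S₁ j⟫ + ⟪Y (S₂ j), S₂ j⟫) ≤
      ∑ j, (α * ‖S₁ j - S₂ j‖ ^ 2 + δ * (‖S₁ j‖ ^ 2 + ‖S₂ j‖ ^ 2)) :=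
    Finset.sum_le_sum fun j _ => hXY _ _
  simp only [Finset.sum_add_distrib, ← Finset.mul_sum] at s1 h1 h2
  have s2 := mul_le_mul_of_nonneg_left hSL hα.le
  have s3 : (L * ‖x - y‖ + ω) ^ 2 ≤ 2 * L ^ 2 * ‖x - y‖ ^ 2 + 2 * ω ^ 2 := by
    nlinarith [sq_nonneg (L * ‖x - y‖ - ω)]
  have s3' := mul_le_mul_of_nonneg_left s3 hα.le
  have s4 := mul_le_mul_of_nonneg_left hS₁ hδ.le
  have s5 := mul_le_mul_of_nonneg_left hS₂ hδ.le
  have s6 := mul_le_mul_of_nonneg_left hS₁ hβ.le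
  have s7 := mul_le_mul_of_nonneg_left hS₂ hβ.le
  have hp' := (abs_le.1 hp).2
  linarith

end Steps

section Final
variable {n d : ℕ}

lemma unif_mod {α β : Type*} [PseudoMetricSpace α] [PseudoMetricSpace β] {D : Set α}
    (hD : IsCompact D) {F : α → β} (hF : ContinuousOn F D) {ε : ℝ} (hε : 0 < ε) :
    ∃ ρ > 0, ∀ q ∈ D, ∀ w ∈ D, dist q w < ρ → dist (F q) (F w) < ε := by
  have := hD.uniformContinuousOn_of_continuous hF
  rw [Metric.uniformContinuousOn_iff] at this
  obtain ⟨ρ, hρ, h⟩ := this ε hε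
  exact ⟨ρ, hρ, fun q hq w hw hd => h q hq w hw hd⟩

lemma compact_dom (T R : ℝ) :
    IsCompact (Icc (0 : ℝ) T ×ˢ Metric.closedBall (0 : EucSp n) R) :=
  isCompact_Icc.prod (isCompact_closedBall _ _)

lemma mod_f {T R : ℝ} {f : ℝ → EucSp n → ℝ}
    (hf_uc : UniformContinuousOn (fun p : ℝ × EucSp n => f p.1 p.2) (Set.Icc 0 T ×ˢ Set.univ))
    {ε : ℝ} (hε : 0 < ε) :
    ∃ ρ > 0, ∀ q ∈ Icc (0 : ℝ) T ×ˢ Metric.closedBall (0 : EucSp n) R,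
      ∀ w ∈ Icc (0 : ℝ) T ×ˢ Metric.closedBall (0 : EucSp n) R, dist q w < ρ →
      Real.exp q.1 * f q.1 q.2 - Real.exp w.1 * f w.1 w.2 ≤ ε := by
  have hc : ContinuousOn (fun q : ℝ × EucSp n => Real.exp q.1 * f q.1 q.2)
      (Icc (0 : ℝ) T ×ˢ Metric.closedBall (0 : EucSp n) R) := by
    refine ContinuousOn.mul (by fun_prop) (hf_uc.continuousOn.mono ?_)
    exact prod_mono le_rfl (subset_univ _)
  obtain ⟨ρ, hρ, h⟩ := unif_mod (compact_dom T R) hc hε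
  refine ⟨ρ, hρ, fun q hq w hw hd => ?_⟩
  have := h q hq w hw hd
  rw [Real.dist_eq] at this
  exact (le_abs_self _).trans this.le

lemma mod_c {T R : ℝ} {K : Set (EucSp n)} (hK : IsCompact K) {c : ℝ → EucSp n → EucSp n → ℝ}
    (hc_uc : UniformContinuousOn (fun p : ℝ × EucSp n × EucSp n => c p.1 p.2.1 p.2.2)
      (Set.Icc 0 T ×ˢ Set.univ ×ˢ K))
    {ε : ℝ} (hε : 0 < ε) :
    ∃ ρ > 0, ∀ q ∈ Icc (0 : ℝ) T ×ˢ Metric.closedBall (0 : EucSp n) R,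
      ∀ w ∈ Icc (0 : ℝ) T ×ˢ Metric.closedBall (0 : EucSp n) R, dist q w < ρ → ∀ ξ ∈ K,
      Real.exp w.1 * c w.1 w.2 ξ - Real.exp q.1 * c q.1 q.2 ξ ≤ ε := by
  have hc : ContinuousOn (fun p : ℝ × EucSp n × EucSp n => Real.exp p.1 * c p.1 p.2.1 p.2.2)
      (Icc (0 : ℝ) T ×ˢ Metric.closedBall (0 : EucSp n) R ×ˢ K) := by
    refine ContinuousOn.mul (by fun_prop) (hc_uc.continuousOn.mono ?_)
    exact prod_mono le_rfl (prod_mono (subset_univ _) le_rfl)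
  obtain ⟨ρ, hρ, h⟩ := unif_mod
    (isCompact_Icc.prod ((isCompact_closedBall _ _).prod hK)) hc hε
  refine ⟨ρ, hρ, fun q hq w hw hd ξ hξ => ?_⟩
  have := h (w.1, w.2, ξ) ⟨hw.1, hw.2, hξ⟩ (q.1, q.2, ξ) ⟨hq.1, hq.2, hξ⟩ (by
    rw [dist_comm] at hd
    rw [Prod.dist_eq] at hd ⊢
    rw [Prod.dist_eq]
    simp only [dist_self]
    have h0 : (0 : ℝ) ≤ dist w.2 q.2 := dist_nonneg
    rw [max_eq_left h0]
    exact hd)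
  rw [Real.dist_eq] at this
  exact (le_abs_self _).trans this.le

lemma mod_time {T R : ℝ} {b : ℝ → EucSp n → EucSp n} {σ : ℝ → EucSp n → Matrix (Fin n) (Fin d) ℝ}
    (hb_cont : Continuous fun p : ℝ × EucSp n => b p.1 p.2)
    (hσ_cont : Continuous fun p : ℝ × EucSp n => σ p.1 p.2) {ω : ℝ} (hω : 0 < ω) :
    ∃ ρ > 0, ∀ t ∈ Icc (0 : ℝ) T, ∀ s ∈ Icc (0 : ℝ) T, ∀ y : EucSp n, ‖y‖ ≤ R → |t - s| < ρ →
      ‖b t y - b s y‖ + ∑ i, ∑ j, |σ t y i j - σ s y i j| ≤ ω := by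
  set F : (ℝ × EucSp n) × ℝ → ℝ := fun p => ‖b p.1.1 p.1.2 - b p.2 p.1.2‖ +
    ∑ i, ∑ j, |σ p.1.1 p.1.2 i j - σ p.2 p.1.2 i j| with hF
  have hσ' : ∀ i j, Continuous fun p : ℝ × EucSp n => σ p.1 p.2 i j := fun i j =>
    hσ_cont.matrix_elem i j
  have g2 : Continuous (fun p : (ℝ × EucSp n) × ℝ => (p.2, p.1.2)) := by fun_prop
  have hFc : Continuous F := by
    refine Continuous.add ?_ ?_
    · exact ((hb_cont.comp continuous_fst).sub (hb_cont.comp g2)).norm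
    · refine continuous_finsetSum _ fun i _ => continuous_finsetSum _ fun j _ => ?_
      exact (((hσ' i j).comp continuous_fst).sub ((hσ' i j).comp g2)).abs
  obtain ⟨ρ, hρ, h⟩ := unif_mod ((compact_dom (n := n) T R).prod (isCompact_Icc (a := (0 : ℝ)) (b := T)))
    hFc.continuousOn hω
  refine ⟨ρ, hρ, fun t ht s hs y hy hts => ?_⟩
  have hy' : y ∈ Metric.closedBall (0 : EucSp n) R := by rw [mem_closedBall_zero_iff]; exact hy
  have := h ((t, y), s) ⟨⟨ht, hy'⟩, hs⟩ ((t, y), t) ⟨⟨ht, hy'⟩, ht⟩ (by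
    rw [Prod.dist_eq]
    simp only [dist_self]
    rw [max_eq_right dist_nonneg, dist_comm, Real.dist_eq]
    exact hts)
  have h0 : F ((t, y), t) = 0 := by simp [hF]
  rw [h0, Real.dist_eq, sub_zero] at this
  exact (le_abs_self _).trans this.le

lemma colv_norm_sq (S : Matrix (Fin n) (Fin d) ℝ) (j : Fin d) :
    ‖colv S j‖ ^ 2 = ∑ i, S i j ^ 2 := by
  rw [EuclideanSpace.norm_sq_eq]
  simp [colv]

lemma colv_sub (S S' : Matrix (Fin n) (Fin d) ℝ) (j : Fin d) :
    colv S j - colv S' j = colv (S - S') j := by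
  ext i; simp [colv]

lemma colv_bound {S : Matrix (Fin n) (Fin d) ℝ} {C : ℝ} (h : ∀ i j, |S i j| ≤ C) :
    ∑ j, ‖colv S j‖ ^ 2 ≤ (d : ℝ) * (n * C ^ 2) := by
  simp only [colv_norm_sq]
  calc ∑ j, ∑ i, S i j ^ 2 ≤ ∑ j : Fin d, ∑ i : Fin n, C ^ 2 := by
        refine Finset.sum_le_sum fun j _ => Finset.sum_le_sum fun i _ => ?_
        rw [← sq_abs (S i j)]
        have := h i j
        gcongr
    _ = _ := by simp

lemma colv_l1 (S : Matrix (Fin n) (Fin d) ℝ) :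
    ∑ j, ‖colv S j‖ ^ 2 ≤ (∑ i, ∑ j, |S i j|) ^ 2 := by
  simp only [colv_norm_sq]
  rw [Finset.sum_comm]
  have hs := Finset.sum_sq_le_sq_sum_of_nonneg (s := Finset.univ)
    (f := fun z : Fin n × Fin d => |S z.1 z.2|) (fun i _ => abs_nonneg _)
  rw [Fintype.sum_prod_type, Fintype.sum_prod_type] at hs
  simpa using hs

lemma usc_U {T R β : ℝ} {U : ℝ → EucSp n → ℝ}
    (h : UpperSemicontinuousOn (fun p : ℝ × EucSp n => U p.1 p.2) (Set.Icc 0 T ×ˢ Set.univ)) :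
    UpperSemicontinuousOn (fun q : ℝ × EucSp n => U q.1 q.2 - β * ‖q.2‖ ^ 2)
      (Icc (0 : ℝ) T ×ˢ Metric.closedBall (0 : EucSp n) R) := by
  have h1 := h.mono (prod_mono (le_refl (Icc (0 : ℝ) T))
    (subset_univ (Metric.closedBall (0 : EucSp n) R)))
  have h2 : Continuous (fun q : ℝ × EucSp n => -(β * ‖q.2‖ ^ 2)) := by fun_prop
  simpa only [sub_eq_add_neg] using h1.add (h2.upperSemicontinuous.upperSemicontinuousOn _)

lemma usc_V {T R β l C : ℝ} (hl : 0 < 1 - l) {V : ℝ → EucSp n → ℝ}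
    (h : LowerSemicontinuousOn (fun p : ℝ × EucSp n => V p.1 p.2) (Set.Icc 0 T ×ˢ Set.univ)) :
    UpperSemicontinuousOn
      (fun q : ℝ × EucSp n => -((1 - l) * V q.1 q.2 + l * C) - β * ‖q.2‖ ^ 2)
      (Icc (0 : ℝ) T ×ˢ Metric.closedBall (0 : EucSp n) R) := by
  refine usc_U (U := fun s y => -((1 - l) * V s y + l * C)) ?_
  intro q hq z hz
  have h1 : (-z - l * C) / (1 - l) < V q.1 q.2 := by
    rw [div_lt_iff₀ hl]; linarith
  filter_upwards [h q hq _ h1] with q' hq'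
  rw [gt_iff_lt, div_lt_iff₀ hl] at hq'
  linarith

end Final

section Core
variable {n d : ℕ}

lemma shift_bound {β κ γ : ℝ} (hβ0 : 0 < β) (hκ0 : 0 ≤ κ) {x ξ : EucSp n} (hξ : ‖ξ‖ ≤ κ)
    (hx : β * ‖x‖ ≤ γ) : β * ‖x + ξ‖ ^ 2 ≤ β * ‖x‖ ^ 2 + 2 * κ * γ + β * κ ^ 2 := by
  have h1 : ‖x + ξ‖ ≤ ‖x‖ + κ := (norm_add_le _ _).trans (by linarith)
  have h2 : ‖x + ξ‖ ^ 2 ≤ (‖x‖ + κ) ^ 2 := by gcongr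
  have h3 := mul_le_mul_of_nonneg_left h2 hβ0.le
  have h4 := mul_le_mul_of_nonneg_left hx hκ0
  have h5 : β * (‖x‖ + κ) ^ 2 = β * ‖x‖ ^ 2 + 2 * (κ * (β * ‖x‖)) + β * κ ^ 2 := by ring
  linarith

lemma size_bound {β C γ : ℝ} (hβ0 : 0 < β) (hβ1 : β ≤ 1) (hC : 1 ≤ C) (hγ0 : 0 < γ)
    (hβγ : β * (2 * C) ≤ γ ^ 2) (x : EucSp n) (hx : β * ‖x‖ ^ 2 ≤ 2 * C) :
    ‖x‖ ≤ 2 * C / β ∧ β * ‖x‖ ≤ γ := by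
  constructor
  · rw [le_div_iff₀ hβ0]
    by_contra hcon
    push Not at hcon
    have h1 : 1 < ‖x‖ := by nlinarith [norm_nonneg x]
    nlinarith [norm_nonneg x]
  · apply abs_le_of_sq_le_sq' _ hγ0.le |>.2
    have := mul_le_mul_of_nonneg_left hx hβ0.le
    nlinarith

lemma convex_bound {l V C : ℝ} (hl0 : 0 < l) (hl1 : l < 1) (h : |V| ≤ C) (hC : 1 ≤ C) :
    |(1 - l) * V + l * C| ≤ C := by
  have := abs_le.1 h
  rw [abs_le]
  constructor <;> nlinarith [this.1, this.2]

lemma time_gap {A q α C ζ ρ₄ : ℝ} (hα : 0 < α) (hC : 1 ≤ C) (hA1 : 1 ≤ A)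
    (hA2 : 4 * C / α + 1 ≤ A * ρ₄) (hζ1 : ζ ≤ 4 * C / α) (h : A ^ 2 * q ^ 2 ≤ ζ) : |q| < ρ₄ := by
  by_contra hcon
  push Not at hcon
  have h1 : 4 * C / α + 1 ≤ A * |q| := hA2.trans (by gcongr)
  have h2 : 0 ≤ 4 * C / α := by positivity
  have h3 : (4 * C / α + 1) ^ 2 ≤ (A * |q|) ^ 2 := by gcongr
  rw [mul_pow, sq_abs] at h3
  nlinarith

lemma sq_le_of_scaled {A q ζ : ℝ} (hA1 : 1 ≤ A) (h : A ^ 2 * q ^ 2 ≤ ζ) : q ^ 2 ≤ ζ := by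
  have h1 : (1 : ℝ) ≤ A ^ 2 := one_le_pow₀ hA1
  nlinarith [sq_nonneg q]

set_option maxHeartbeats 4000000 in
/-- Core contradiction. -/
theorem core_contra (T : ℝ)
    (b : ℝ → EucSp n → EucSp n) (σ : ℝ → EucSp n → Matrix (Fin n) (Fin d) ℝ)
    (f : ℝ → EucSp n → ℝ) (g : EucSp n → ℝ)
    (K : Set (EucSp n)) (c : ℝ → EucSp n → EucSp n → ℝ)
    (hb_cont : Continuous fun p : ℝ × EucSp n => b p.1 p.2)
    (hσ_cont : Continuous fun p : ℝ × EucSp n => σ p.1 p.2)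
    {Cb Cs L C κ : ℝ} (hb : ∀ t x, ‖b t x‖ ≤ Cb) (hCb : 0 ≤ Cb) (hCs : 0 ≤ Cs)
    (hs : ∀ t x, ∑ j, ‖colv (σ t x) j‖ ^ 2 ≤ Cs) (hL : 0 < L)
    (hlip : ∀ t ∈ Set.Icc (0:ℝ) T, ∀ x x' : EucSp n,
      ‖b t x - b t x'‖ + (∑ i, ∑ j, |σ t x i j - σ t x' i j|) ≤ L * ‖x - x'‖)
    (hf_uc : UniformContinuousOn (fun p : ℝ × EucSp n => f p.1 p.2)
      (Set.Icc 0 T ×ˢ Set.univ))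
    (hfC : ∀ t ∈ Set.Icc (0:ℝ) T, ∀ x, Real.exp t * f t x ≤ C)
    (hK : K.Nonempty) (hKcomp : IsCompact K) (hκ : ∀ ξ ∈ K, ‖ξ‖ ≤ κ) (hκ0 : 0 ≤ κ)
    (hc_uc : UniformContinuousOn (fun p : ℝ × EucSp n × EucSp n => c p.1 p.2.1 p.2.2)
      (Set.Icc 0 T ×ˢ Set.univ ×ˢ K))
    (k : ℝ) (hk : 0 < k) (hck : ∀ t x, ∀ ξ ∈ K, k ≤ c t x ξ)
    (U V : ℝ → EucSp n → ℝ)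
    (hU_bdd : ∀ t x, |U t x| ≤ C) (hC : 1 ≤ C)
    (hU_usc : UpperSemicontinuousOn (fun p : ℝ × EucSp n => U p.1 p.2)
      (Set.Icc 0 T ×ˢ Set.univ))
    (hU_sub : IsSubHJB1 T b σ f g K c U)
    (hV_bdd : ∀ t x, |V t x| ≤ C)
    (hV_lsc : LowerSemicontinuousOn (fun p : ℝ × EucSp n => V p.1 p.2)
      (Set.Icc 0 T ×ˢ Set.univ))
    (hV_sup : IsSuperHJB1 T b σ f g K c V)
    {l β γ m : ℝ} (hl0 : 0 < l) (hl1 : l < 1) (hβ0 : 0 < β) (hβ1 : β ≤ 1) (hγ0 : 0 < γ)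
    (hm : 0 < m) (hβγ : β * (2 * C) ≤ γ ^ 2) (n1 : 2 * β * Cs ≤ m / 16)
    (n2 : 2 * β * κ ^ 2 ≤ l * k / 8) (n3 : 4 * Cb * γ ≤ m / 16) (n4 : 4 * κ * γ ≤ l * k / 8)
    {t₀ : ℝ} {x₀ : EucSp n} (ht₀ : t₀ ∈ Icc 0 T) (hx₀ : β * ‖x₀‖ ^ 2 ≤ 2 * C)
    (hstart : m ≤ U t₀ x₀ - ((1 - l) * V t₀ x₀ + l * C) - 2 * β * ‖x₀‖ ^ 2) : False := by
  have hl : 0 < 1 - l := by linarith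
  have hlk : 0 < l * k := mul_pos hl0 hk
  -- size of near maximum points
  have hsize := size_bound (n := n) hβ0 hβ1 hC hγ0 hβγ
  set R := 2 * C / β + κ + 1 with hR
  have hR0 : 0 < R := by positivity
  set D : Set (ℝ × EucSp n) := Icc (0 : ℝ) T ×ˢ Metric.closedBall (0 : EucSp n) R with hD
  have hmemD : ∀ t ∈ Icc (0 : ℝ) T, ∀ x : EucSp n, ‖x‖ ≤ R → ((t, x) : ℝ × EucSp n) ∈ D := by
    intro t ht x hx
    exact ⟨ht, by rw [mem_closedBall_zero_iff]; exact hx⟩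
  have hDn : ∀ q ∈ D, ‖q.2‖ ≤ R := fun q hq => by
    have := hq.2; rwa [mem_closedBall_zero_iff] at this
  have hDc : IsCompact D := compact_dom T R
  have hq₀ : ((t₀, x₀) : ℝ × EucSp n) ∈ D := hmemD _ ht₀ _ (by
    have := (hsize x₀ hx₀).1; linarith)
  -- strict supersolution bounds
  have hW : ∀ t x, |(1 - l) * V t x + l * C| ≤ C := fun t x =>
    convex_bound hl0 hl1 (hV_bdd t x) hC
  set u : ℝ → EucSp n → ℝ := fun t x => U t x - β * ‖x‖ ^ 2 with hu
  set v : ℝ → EucSp n → ℝ := fun s y => -((1 - l) * V s y + l * C) - β * ‖y‖ ^ 2 with hv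
  have hu_usc : UpperSemicontinuousOn (fun q : ℝ × EucSp n => u q.1 q.2) D := usc_U hU_usc
  have hv_usc : UpperSemicontinuousOn (fun q : ℝ × EucSp n => v q.1 q.2) D := usc_V hl hV_lsc
  -- moduli
  obtain ⟨ρ₁, hρ₁, hmf⟩ := mod_f (R := R) hf_uc (show 0 < m / 16 by positivity)
  obtain ⟨ρ₂, hρ₂, hmc⟩ := mod_c (R := R) hKcomp hc_uc (show 0 < l * k / 4 by positivity)
  obtain ⟨ρ₃, hρ₃, hmt⟩ := terminal_gap hDc (T := T) (m := m / 2) hu_usc hv_usc (by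
    rintro ⟨t, x⟩ hq ht
    simp only at ht
    subst ht
    have h1 := hU_sub.2 x
    have h2 := hV_sup.2 x
    have h3 := (abs_le.1 (hV_bdd t x)).2
    have h4 : 0 ≤ β * ‖x‖ ^ 2 := by positivity
    have h5 := mul_le_mul_of_nonneg_left h3 hl0.le
    simp only [hu, hv]
    linarith)
  set ρ := min ρ₁ (min ρ₂ ρ₃) with hρ
  have hρ0 : 0 < ρ := by positivity
  have hρa : ρ ≤ ρ₁ := min_le_left _ _
  have hρb : ρ ≤ ρ₂ := (min_le_right _ _).trans (min_le_left _ _)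
  have hρc : ρ ≤ ρ₃ := (min_le_right _ _).trans (min_le_right _ _)
  clear_value ρ
  -- penalization parameters
  set τ := m / (64 * (L + L ^ 2 + 1)) with hτ
  have hτ0 : 0 < τ := by positivity
  have hτ1 : 8 * (L + L ^ 2) * τ ≤ m / 8 := by
    have : (L + L ^ 2 + 1) * τ = m / 64 := by rw [hτ]; field_simp
    linarith
  clear_value τ
  have hG : ∀ q ∈ D, ∀ w ∈ D, u q.1 q.2 + v w.1 w.2 ≤ 2 * C := by
    intro q _ w _
    have h1 := (abs_le.1 (hU_bdd q.1 q.2)).2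
    have h2 := (abs_le.1 (hW w.1 w.2)).1
    have h3 : 0 ≤ β * ‖q.2‖ ^ 2 := by positivity
    have h4 : 0 ≤ β * ‖w.2‖ ^ 2 := by positivity
    simp only [hu, hv]
    linarith
  have hα00 : 0 < 8 * C / ρ ^ 2 := by positivity
  obtain ⟨α, hα0, A0, hA0, hpen⟩ := penal_choice hq₀
    (fun q w : ℝ × EucSp n => u q.1 q.2 + v w.1 w.2) hG hτ0 hα00
  have hα : 0 < α := lt_of_lt_of_le hα00 hα0
  set ω := min 1 (m / (32 * (α * (2 * R + 1)))) with hω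
  have hω0 : 0 < ω := by positivity
  have hω1 : ω ≤ 1 := min_le_left _ _
  have hω2 : α * ω * (2 * R + 1) ≤ m / 32 := by
    have : ω ≤ m / (32 * (α * (2 * R + 1))) := min_le_right _ _
    rw [le_div_iff₀ (by positivity)] at this
    linarith
  clear_value ω
  obtain ⟨ρ₄, hρ₄, hmt4⟩ := mod_time (T := T) (R := R) hb_cont hσ_cont hω0
  set A := max A0 ((4 * C / α + 1) / ρ₄) with hA
  have hAA0 : A0 ≤ A := le_max_left _ _
  have hA1 : 1 ≤ A := le_trans hA0 hAA0
  have hA2 : 4 * C / α + 1 ≤ A * ρ₄ := by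
    have : (4 * C / α + 1) / ρ₄ ≤ A := le_max_right _ _
    rwa [div_le_iff₀ hρ₄] at this
  clear_value A
  set δ := min τ (min (m / (32 * (1 + 2 * Cb + Cs))) (min (m / 2) (l * k / 8))) with hδ
  have hδ0 : 0 < δ := by positivity
  have hδ1 : δ ≤ τ := min_le_left _ _
  have hδ2 : δ * (1 + 2 * Cb + Cs) ≤ m / 32 := by
    have : δ ≤ m / (32 * (1 + 2 * Cb + Cs)) := (min_le_right _ _).trans (min_le_left _ _)
    rw [le_div_iff₀ (by positivity)] at this
    linarith
  have hδ3 : δ ≤ m / 2 :=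
    (min_le_right _ _).trans ((min_le_right _ _).trans (min_le_left _ _))
  have hδ4 : δ ≤ l * k / 8 :=
    (min_le_right _ _).trans ((min_le_right _ _).trans (min_le_right _ _))
  clear_value δ
  -- theorem on sums
  obtain ⟨⟨t, x⟩, hq, ⟨s, y⟩, hw, p₁, p₂, a, r₁, r₂, X, Y, hmax, hp, hr₁, hr₂, hX, hY, hXY⟩ :=
    parab_sums hDc ⟨_, hq₀⟩ hu_usc hv_usc hα hδ0 (show 0 < A by linarith)
  have hfine := hpen A hAA0 δ (t, x) hq (s, y) hw hmax
  have h00 := hmax _ hq₀ _ hq₀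
  simp only [sub_self, norm_zero] at h00
  have hpn := pen_nonneg A (t, x) (s, y)
  have hpdef : pen A (t, x) (s, y) = A ^ 2 * (t - s) ^ 2 + ‖x - y‖ ^ 2 := rfl
  rw [← hpdef] at h00
  set ζ := pen A (t, x) (s, y) with hζ
  clear_value ζ
  have hval : m / 2 + α / 2 * ζ ≤ u t x + v s y := by
    simp only [hu, hv] at h00 ⊢
    linarith only [h00, hstart, hδ3]
  have hαζ : 0 ≤ α / 2 * ζ := by positivity
  have hbx : 0 ≤ β * ‖x‖ ^ 2 := by positivity
  have hby : 0 ≤ β * ‖y‖ ^ 2 := by positivity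
  have hUb := (abs_le.1 (hU_bdd t x)).2
  have hWb := (abs_le.1 (hW s y)).1
  have hUW : m / 2 ≤ U t x - ((1 - l) * V s y + l * C) := by
    simp only [hu, hv] at hval; linarith only [hval, hαζ, hbx, hby]
  have htot : β * ‖x‖ ^ 2 + β * ‖y‖ ^ 2 + α / 2 * ζ ≤ 2 * C := by
    simp only [hu, hv] at hval; linarith only [hval, hUb, hWb, hm]
  obtain ⟨hxR, hxγ⟩ := hsize x (by linarith only [htot, hby, hαζ])
  obtain ⟨hyR, hyγ⟩ := hsize y (by linarith only [htot, hbx, hαζ])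
  have hζ1 : ζ ≤ 4 * C / α := by
    rw [le_div_iff₀ hα]; linarith only [htot, hbx, hby]
  have hζ2 : ζ < ρ ^ 2 := by
    have h1 : 8 * C ≤ α * ρ ^ 2 := by
      have : 8 * C / ρ ^ 2 ≤ α := hα0
      rwa [div_le_iff₀ (by positivity)] at this
    have h2 : α * ζ < α * ρ ^ 2 := by linarith only [h1, htot, hbx, hby, hC]
    exact lt_of_mul_lt_mul_left h2 hα.le
  have htsζ : A ^ 2 * (t - s) ^ 2 ≤ ζ := by
    rw [hpdef]; exact le_add_of_nonneg_right (sq_nonneg _)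
  have hxyζ : ‖x - y‖ ^ 2 ≤ ζ := by
    rw [hpdef]; exact le_add_of_nonneg_left (by positivity)
  have hts2 : (t - s) ^ 2 ≤ ζ := sq_le_of_scaled hA1 htsζ
  have hdist : dist ((t, x) : ℝ × EucSp n) (s, y) < ρ := by
    rw [Prod.dist_eq, max_lt_iff]
    constructor
    · rw [Real.dist_eq]
      exact abs_lt_of_sq_lt_sq (hts2.trans_lt hζ2) hρ0.le
    · rw [dist_eq_norm]
      have : |‖x - y‖| < ρ := abs_lt_of_sq_lt_sq (hxyζ.trans_lt hζ2) hρ0.le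
      rwa [abs_of_nonneg (norm_nonneg _)] at this
  have hts4 : |t - s| < ρ₄ := time_gap hα hC hA1 hA2 hζ1 htsζ
  have ht : t ∈ Icc 0 T := hq.1
  have hsI : s ∈ Icc 0 T := hw.1
  -- terminal times are excluded
  have hterm : ¬ (t = T ∨ s = T) := by
    intro h
    have := hmt (t, x) hq (s, y) hw h (hdist.trans_le hρc)
    simp only at this
    linarith only [this, hval, hαζ]
  push Not at hterm
  have htT : t < T := lt_of_le_of_ne ht.2 hterm.1
  have hsT : s < T := lt_of_le_of_ne hsI.2 hterm.2
  have hsup := super_step hV_sup hl0 hl1 hk hck hV_bdd hsI.1 hsT (show ‖y‖ < R by linarith only [hyR, hR, hκ0])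
    (hfC s hsI y) hY
  rcases sub_step hU_sub ht.1 htT (show ‖x‖ < R by linarith only [hxR, hR, hκ0]) hX with hloc | hnl
  · -- local case
    have hdec : ‖b t x - b s y‖ + ∑ i, ∑ j, |σ t x i j - σ s y i j| ≤ L * ‖x - y‖ + ω := by
      have e1 := hlip t ht x y
      have e2 := hmt4 t ht s hsI y (by linarith only [hyR, hR, hκ0]) hts4
      have e3 : ‖b t x - b s y‖ ≤ ‖b t x - b t y‖ + ‖b t y - b s y‖ := by
        simpa using norm_add_le (b t x - b t y) (b t y - b s y)
      have e4 : ∑ i, ∑ j, |σ t x i j - σ s y i j| ≤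
          ∑ i, ∑ j, |σ t x i j - σ t y i j| + ∑ i, ∑ j, |σ t y i j - σ s y i j| := by
        simp only [← Finset.sum_add_distrib]
        refine Finset.sum_le_sum fun i _ => Finset.sum_le_sum fun j _ => ?_
        exact abs_sub_le _ _ _
      linarith only [e1, e2, e3, e4]
    have hsum0 : 0 ≤ ∑ i, ∑ j, |σ t x i j - σ s y i j| :=
      Finset.sum_nonneg fun i _ => Finset.sum_nonneg fun j _ => abs_nonneg _
    have hbL : ‖b t x - b s y‖ ≤ L * ‖x - y‖ + ω := by linarith only [hdec, hsum0]
    have hSL : ∑ j, ‖colv (σ t x) j - colv (σ s y) j‖ ^ 2 ≤ (L * ‖x - y‖ + ω) ^ 2 := by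
      simp only [colv_sub]
      refine (colv_l1 _).trans ?_
      simp only [Matrix.sub_apply]
      have := norm_nonneg (b t x - b s y)
      gcongr
      linarith only [hdec, this]
    have hfin := local_combine hα hδ0 hβ0 hp hr₁ hr₂ hXY hloc hsup.1 (hb t x) (hb s y)
      (hs t x) (hs s y) hbL hSL
    have g1 := hmf (t, x) hq (s, y) hw (hdist.trans_le hρa)
    simp only at g1
    have g2 : 2 * Cb * (β * ‖x‖ + β * ‖y‖) ≤ 2 * Cb * (γ + γ) := by gcongr
    have g3 : (L + L ^ 2) * (α * ‖x - y‖ ^ 2) ≤ (L + L ^ 2) * (8 * τ) := by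
      have g0 : α * ‖x - y‖ ^ 2 ≤ α * ζ := mul_le_mul_of_nonneg_left hxyζ hα.le
      have g0' : α * ‖x - y‖ ^ 2 ≤ 8 * τ := by linarith only [g0, hfine, hδ1]
      exact mul_le_mul_of_nonneg_left g0' (by positivity)
    have g4 : ‖x - y‖ ≤ 2 * R := by
      have h1 := norm_sub_le x y
      linarith only [h1, hxR, hyR, hR, hκ0]
    have g5 : α * ω * ‖x - y‖ ≤ α * ω * (2 * R) := by gcongr
    have g6 : α * ω ^ 2 ≤ α * ω :=
      mul_le_mul_of_nonneg_left (pow_le_of_le_one hω0.le hω1 two_ne_zero) hα.le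
    simp only at hfin
    linarith only [hfin, g1, g2, g3, g5, g6, hUW, hω2, hτ1, hδ2, n1, n3, hm]
  · -- nonlocal case
    obtain ⟨ξ, hξ, hU1⟩ := mtop_approx hK hnl (show 0 < l * k / 8 by positivity)
    have hV1 := hsup.2 ξ hξ
    have hξn := hκ ξ hξ
    have e1 := shift_bound hβ0 hκ0 hξn hxγ
    have e2 := shift_bound hβ0 hκ0 hξn hyγ
    have hn : ∀ x : EucSp n, ‖x‖ ≤ 2 * C / β → ‖x + ξ‖ ≤ R := fun x hx =>
      (norm_add_le _ _).trans (by linarith only [hx, hξn, hR])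
    have hsh := hmax (t, x + ξ) (hmemD t ht _ (hn x hxR)) (s, y + ξ) (hmemD s hsI _ (hn y hyR))
    simp only [add_sub_add_right_eq_sub, hu, hv] at hsh
    have g1 := hmc (t, x) hq (s, y) hw (hdist.trans_le hρb) ξ hξ
    simp only at g1
    linarith only [hsh, e1, e2, g1, hU1, hV1, hδ4, n2, n4, hlk]

end Core

/-- **Comparison principle** for equation (HJB1): a bounded usc viscosity subsolution is
dominated by a bounded lsc viscosity supersolution on `[0,T] × ℝⁿ`. -/
theorem comparison_principle_HJB1
    {n d : ℕ} (hn : 0 < n) (hd : 0 < d) (T : ℝ) (hT : 0 < T)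
    (b : ℝ → EucSp n → EucSp n) (σ : ℝ → EucSp n → Matrix (Fin n) (Fin d) ℝ)
    (f : ℝ → EucSp n → ℝ) (g : EucSp n → ℝ)
    (K : Set (EucSp n)) (c : ℝ → EucSp n → EucSp n → ℝ)
    -- (H1)
    (hb_cont : Continuous fun p : ℝ × EucSp n => b p.1 p.2)
    (hσ_cont : Continuous fun p : ℝ × EucSp n => σ p.1 p.2)
    (hb_bdd : ∃ C, ∀ t x, ‖b t x‖ ≤ C)
    (hσ_bdd : ∃ C, ∀ t x i j, |σ t x i j| ≤ C)
    (hlip : ∃ C > (0:ℝ), ∀ t ∈ Set.Icc (0:ℝ) T, ∀ x x' : EucSp n,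
      ‖b t x - b t x'‖ + (∑ i, ∑ j, |σ t x i j - σ t x' i j|) ≤ C * ‖x - x'‖)
    -- (H2)
    (hf_bdd : ∃ C, ∀ t x, |f t x| ≤ C)
    (hf_uc : UniformContinuousOn (fun p : ℝ × EucSp n => f p.1 p.2)
      (Set.Icc 0 T ×ˢ Set.univ))
    (hg_bdd : ∃ C, ∀ x, |g x| ≤ C)
    (hg_uc : UniformContinuous g)
    -- (H3)
    (hK : K.Nonempty) (hKcomp : IsCompact K)
    (hc_uc : UniformContinuousOn (fun p : ℝ × EucSp n × EucSp n => c p.1 p.2.1 p.2.2)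
      (Set.Icc 0 T ×ˢ Set.univ ×ˢ K))
    (k : ℝ) (hk : 0 < k) (hck : ∀ t x, ∀ ξ ∈ K, k ≤ c t x ξ)
    (hc_sub : ∀ t x, ∀ ξ₁ ∈ K, ∀ ξ₂ ∈ K, ξ₁ + ξ₂ ∈ K →
      c t x (ξ₁ + ξ₂) ≤ c t x ξ₁ + c t x ξ₂)
    -- the sub- and supersolutions
    (U V : ℝ → EucSp n → ℝ)
    (hU_bdd : ∃ C, ∀ t x, |U t x| ≤ C)
    (hU_usc : UpperSemicontinuousOn (fun p : ℝ × EucSp n => U p.1 p.2)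
      (Set.Icc 0 T ×ˢ Set.univ))
    (hU_sub : IsSubHJB1 T b σ f g K c U)
    (hV_bdd : ∃ C, ∀ t x, |V t x| ≤ C)
    (hV_lsc : LowerSemicontinuousOn (fun p : ℝ × EucSp n => V p.1 p.2)
      (Set.Icc 0 T ×ˢ Set.univ))
    (hV_sup : IsSuperHJB1 T b σ f g K c V) :
    ∀ t ∈ Set.Icc (0:ℝ) T, ∀ x, U t x ≤ V t x := by
  intro t₀ ht₀ x₀
  by_contra hcon
  push Not at hcon
  obtain ⟨Cb, hCb⟩ := hb_bdd
  obtain ⟨Cσ, hCσ⟩ := hσ_bdd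
  obtain ⟨L, hL, hlipL⟩ := hlip
  obtain ⟨Cf, hCf⟩ := hf_bdd
  obtain ⟨CU, hCU⟩ := hU_bdd
  obtain ⟨CV, hCV⟩ := hV_bdd
  obtain ⟨κ', hκ'⟩ := hKcomp.isBounded.exists_norm_le
  have hCb0 : 0 ≤ Cb := (norm_nonneg _).trans (hCb 0 0)
  have hCU0 : 0 ≤ CU := (abs_nonneg _).trans (hCU 0 0)
  have hCV0 : 0 ≤ CV := (abs_nonneg _).trans (hCV 0 0)
  have hCf0 : 0 ≤ Cf := (abs_nonneg _).trans (hCf 0 0)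
  have hκ0 : 0 ≤ κ' := by
    obtain ⟨ξ, hξ⟩ := hK
    exact (norm_nonneg _).trans (hκ' ξ hξ)
  have hE : 0 ≤ Real.exp T * Cf := mul_nonneg (Real.exp_pos _).le hCf0
  obtain ⟨C, hC⟩ : ∃ C : ℝ, C = CU + CV + Real.exp T * Cf + 1 := ⟨_, rfl⟩
  have hC1 : 1 ≤ C := by linarith
  have hCpos : 0 < C := by linarith
  have hUC : ∀ t x, |U t x| ≤ C := fun t x => (hCU t x).trans (by linarith)
  have hVC : ∀ t x, |V t x| ≤ C := fun t x => (hCV t x).trans (by linarith)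
  have hfC : ∀ t ∈ Set.Icc (0:ℝ) T, ∀ x, Real.exp t * f t x ≤ C := by
    intro t ht x
    have h1 : Real.exp t * f t x ≤ Real.exp T * Cf :=
      mul_le_mul_of_nonneg (Real.exp_le_exp.2 ht.2) ((le_abs_self _).trans (hCf t x))
        (Real.exp_pos _).le hCf0
    linarith
  obtain ⟨Cs, hCsdef⟩ : ∃ Cs : ℝ, Cs = (d : ℝ) * (n * Cσ ^ 2) := ⟨_, rfl⟩
  have hCs0 : 0 ≤ Cs := by rw [hCsdef]; positivity
  have hs : ∀ t x, ∑ j, ‖colv (σ t x) j‖ ^ 2 ≤ Cs := fun t x => by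
    rw [hCsdef]; exact colv_bound (hCσ t x)
  obtain ⟨θ, hθ⟩ : ∃ θ : ℝ, θ = U t₀ x₀ - V t₀ x₀ := ⟨_, rfl⟩
  have hθ0 : 0 < θ := by linarith
  obtain ⟨l, hl⟩ : ∃ l : ℝ, l = min (1 / 2) (θ / (8 * C)) := ⟨_, rfl⟩
  have hl0 : 0 < l := by rw [hl]; positivity
  have hl2 : l ≤ 1 / 2 := by rw [hl]; exact min_le_left _ _
  have hlC : l * (8 * C) ≤ θ := by
    rw [← le_div_iff₀ (by positivity), hl]; exact min_le_right _ _
  obtain ⟨γ, hγ⟩ : ∃ γ : ℝ, γ = min (θ / 2 / (64 * (Cb + 1))) (l * k / (32 * (κ' + 1))) :=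
    ⟨_, rfl⟩
  have hγ0 : 0 < γ := by rw [hγ]; positivity
  have hγ1 : γ * (64 * (Cb + 1)) ≤ θ / 2 := by
    rw [← le_div_iff₀ (by positivity), hγ]; exact min_le_left _ _
  have hγ2 : γ * (32 * (κ' + 1)) ≤ l * k := by
    rw [← le_div_iff₀ (by positivity), hγ]; exact min_le_right _ _
  obtain ⟨β, hβ⟩ : ∃ β : ℝ, β = min (min 1 (γ ^ 2 / (2 * C)))
      (min (θ / (8 * (‖x₀‖ ^ 2 + 1))) (min (θ / 2 / (32 * (Cs + 1)))
        (l * k / (16 * (κ' ^ 2 + 1))))) := ⟨_, rfl⟩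
  have hβ0 : 0 < β := by rw [hβ]; positivity
  have hβ1 : β ≤ 1 := by rw [hβ]; exact (min_le_left _ _).trans (min_le_left _ _)
  have hβ2 : β * (2 * C) ≤ γ ^ 2 := by
    rw [← le_div_iff₀ (by positivity), hβ]
    exact (min_le_left _ _).trans (min_le_right _ _)
  have hβ3 : β * (8 * (‖x₀‖ ^ 2 + 1)) ≤ θ := by
    rw [← le_div_iff₀ (by positivity), hβ]
    exact (min_le_right _ _).trans (min_le_left _ _)
  have hβ4 : β * (32 * (Cs + 1)) ≤ θ / 2 := by
    rw [← le_div_iff₀ (by positivity), hβ]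
    exact (min_le_right _ _).trans ((min_le_right _ _).trans (min_le_left _ _))
  have hβ5 : β * (16 * (κ' ^ 2 + 1)) ≤ l * k := by
    rw [← le_div_iff₀ (by positivity), hβ]
    exact (min_le_right _ _).trans ((min_le_right _ _).trans (min_le_right _ _))
  have hU1 := (abs_le.1 (hUC t₀ x₀)).2
  have hV1 := (abs_le.1 (hVC t₀ x₀)).1
  have hlV : l * (-C) ≤ l * V t₀ x₀ := mul_le_mul_of_nonneg_left hV1 hl0.le
  refine core_contra T b σ f g K c hb_cont hσ_cont hCb hCb0 hCs0 hs hL hlipL hf_uc hfC hK hKcomp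
    hκ' hκ0 hc_uc k hk hck U V hUC hC1 hU_usc hU_sub hVC hV_lsc hV_sup hl0 (by linarith) hβ0 hβ1
    hγ0 (show 0 < θ / 2 by linarith) hβ2 ?_ ?_ ?_ ?_ (t₀ := t₀) (x₀ := x₀) ht₀ ?_ ?_
  · linarith only [hβ4, hβ0]
  · linarith only [hβ5, hβ0]
  · linarith only [hγ1, hγ0]
  · linarith only [hγ2, hγ0]
  · linarith only [hβ3, hβ0, hU1, hV1, hθ, hCpos]
  · linarith only [hβ3, hβ0, hlV, hlC, hθ]
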